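/- There exist constants ε₀ ∈ (0,1) and C > 0, depending only on n, κ0, κ1 and C₀, such that for every ε ∈ (0, ε₀), every harmonic function u on Ω₁ with boundary values φ on Γ₁⁺ and ψ on Γ₁⁻, and w := u − ũ: (i) for every x₀ = (x₀', x₀,n) ∈ Ω_{1/2} with |x₀'| ≤ √ε, setting δ = δ(x₀'), ∫_{Ω̂_δ(x₀)} |∇w|² dx ≤ C·ε^n·[ |φ(x₀') − ψ(x₀')|² + ε·(‖w‖²_{L²(Ω₁)} + ‖φ‖²_{C²} + ‖ψ‖²_{C²}) ]; (ii) for every x₀ ∈ Ω_{1/2} with √ε < |x₀'| < 1/2, ∫_{Ω̂_δ(x₀)} |∇w|² dx ≤ C·|x₀'|^{2n}·[ |φ(x₀') − ψ(x₀')|² + |x₀'|²·(‖w‖²_{L²(Ω₁)} + ‖φ‖²_{C²} + ‖ψ‖²_{C²}) ]. -/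

import Mathlib

/-!
Fix `x₀'` with `|x₀'| < 1/2` and put `D = ε + |x₀'|²`, which is comparable to the width of the gap
over `x₀'`. Both parts of the theorem follow from one estimate (`local_energy`),
`∫_{Ω̂_δ(x₀)} |∇w|² ≤ C Dⁿ (|φ - ψ|²(x₀') + D (‖w‖² + ‖φ‖² + ‖ψ‖²))`,
since `D ≤ 2ε` in the first regime and `D ≤ 2|x₀'|²` in the second one.

Instead of iterating a Caccioppoli inequality over nested neighbourhoods of `x₀`, the proof uses a
single weighted energy inequality. The weight is `η = χ · (1 + a²|x' - x₀'|²)^{-(n+1)}` with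
`a = ρ/D`, a small `ρ` depending only on `n` and `C₀`, and a fixed cutoff `χ` supported in
`|x'| ≤ 3/4`.

* `key_identity`: the divergence theorem for fields `η² w p`. As `w` is only continuous up to the
  boundary graphs, where it vanishes, `w` is replaced by a truncation vanishing for `|w| ≤ t`; the
  resulting field is compactly supported in `Ω₁` (`compact_superlevel`), and `t → 0`.
* `energy_ineq`: the identity is used with `p = ∇w + b w eₙ`, where `b` is a vertical profile with
  `∂ₙ b = 1/δ²` and `|b| ≤ 1/(2δ)`. The extra term builds the Poincaré inequality across the gap
  into the energy identity, so the energy `∫ η²|∇w|²` is controlled as soon as `|∇η|²` is at most a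
  small multiple of `(η/δ)²` plus a constant `E`; the result is
  `∫ η²|∇w|² ≤ 4 E‖w‖² + 8 ∫ η² (δ Δũ)²`.
* `weight_bound`: the weight satisfies that condition with `E` of order `D^{4(n+1)}`; its
  logarithmic derivative is small relative to `1/δ` near `x₀'`, and far from `x₀'` the weight itself
  is of size `D^{2(n+1)}`.
* `lapl_util_bound`, `source_pointwise`, `source_integral`: direct differentiation of `ũ` gives
  `δ|Δũ| ≲ |φ - ψ|(x') + M(δ + |x'|)`, and integrating against `η²`, which concentrates on
  `|x' - x₀'| ≲ D`, yields the volume factor `D · D^{n-1} = Dⁿ`.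
* `local_le_weighted`: on `Ω̂_δ(x₀)` the weight is bounded below by `2^{-(n+1)}`.
-/

open MeasureTheory Metric Finset

noncomputable section

/-- `ℝ^{n-1}`, the horizontal (tangential) variables `x'`. -/
abbrev Ep (n : ℕ) := EuclideanSpace ℝ (Fin (n - 1))

/-- `ℝ^n = ℝ^{n-1} × ℝ`, points written `x = (x', x_n)`. -/
abbrev Efull (n : ℕ) := Ep n × ℝ

/-- The narrow region `Ω_r`. -/
def Omega (n : ℕ) (ε : ℝ) (h1 h2 : Ep n → ℝ) (r : ℝ) : Set (Efull n) :=
  {x | ‖x.1‖ < r ∧ -ε/2 + h2 x.1 < x.2 ∧ x.2 < ε/2 + h1 x.1}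

/-- Top boundary `Γ_r⁺`. -/
def Gammap (n : ℕ) (ε : ℝ) (h1 : Ep n → ℝ) (r : ℝ) : Set (Efull n) :=
  {x | ‖x.1‖ ≤ r ∧ x.2 = ε/2 + h1 x.1}

/-- Bottom boundary `Γ_r⁻`. -/
def Gammam (n : ℕ) (ε : ℝ) (h2 : Ep n → ℝ) (r : ℝ) : Set (Efull n) :=
  {x | ‖x.1‖ ≤ r ∧ x.2 = -ε/2 + h2 x.1}

/-- `Ω̂_s(x₀) = {x ∈ Ω_{1/2} : |x' - x₀'| < s}`. -/
def OmegaHat (n : ℕ) (ε : ℝ) (h1 h2 : Ep n → ℝ) (x0 : Efull n) (s : ℝ) : Set (Efull n) :=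
  {x | x ∈ Omega n ε h1 h2 (1/2) ∧ ‖x.1 - x0.1‖ < s}

/-- The `n` coordinate directions of `ℝ^{n-1} × ℝ`: the first `n-1` are the horizontal
Euclidean basis vectors, the last is the vertical direction. -/
def dir (n : ℕ) (α : Fin n) : Efull n :=
  if h : (α : ℕ) < n - 1 then (EuclideanSpace.single (⟨(α : ℕ), h⟩ : Fin (n - 1)) 1, (0:ℝ))
  else (0, 1)

/-- Tangential direction `e_α` for `α ∈ {1, …, n-1}`. -/
def tang (n : ℕ) (α : Fin (n - 1)) : Efull n := (EuclideanSpace.single α 1, (0:ℝ))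

/-- Vertical direction `e_n`. -/
def vert (n : ℕ) : Efull n := (0, 1)

/-- Pointwise Laplacian `Δu = Σ_α ∂_α∂_α u`. -/
def lapl (n : ℕ) (u : Efull n → ℝ) (x : Efull n) : ℝ :=
  ∑ α : Fin n, fderiv ℝ (fun y => fderiv ℝ u y (dir n α)) x (dir n α)

/-- The auxiliary function `ū(x', x_n) = (x_n - h2(x') + ε/2)/(ε + h1(x') - h2(x'))`. -/
def ubar (n : ℕ) (ε : ℝ) (h1 h2 : Ep n → ℝ) (x : Efull n) : ℝ :=
  (x.2 - h2 x.1 + ε/2) / (ε + h1 x.1 - h2 x.1)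

/-- The auxiliary function `ũ = φ(x')·ū + ψ(x')·(1 - ū)`. -/
def util (n : ℕ) (ε : ℝ) (h1 h2 φ ψ : Ep n → ℝ) (x : Efull n) : ℝ :=
  φ x.1 * ubar n ε h1 h2 x + ψ x.1 * (1 - ubar n ε h1 h2 x)

/-- `C²`-norm on the closed unit ball: `sup_{|x'| ≤ 1} (|f| + |∇f| + |∇²f|)`. -/
def C2norm {F : Type*} [NormedAddCommGroup F] [NormedSpace ℝ F] (n : ℕ)
    (f : Ep n → F) : ℝ :=
  ⨆ y : closedBall (0 : Ep n) 1,
    (‖f (y : Ep n)‖ + ‖fderiv ℝ f (y : Ep n)‖ + ‖fderiv ℝ (fderiv ℝ f) (y : Ep n)‖)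

/-- `C²(S)`-norm of a function on `ℝ^n`. -/
def C2normOn (n : ℕ) (S : Set (Efull n)) (f : Efull n → ℝ) : ℝ :=
  ⨆ y : S,
    (‖f (y : Efull n)‖ + ‖fderiv ℝ f (y : Efull n)‖ + ‖fderiv ℝ (fderiv ℝ f) (y : Efull n)‖)

/-- `‖∇f‖_∞ = sup_{|x'| ≤ 1} |∇f(x')|`. -/
def gradSup {F : Type*} [NormedAddCommGroup F] [NormedSpace ℝ F] (n : ℕ) (f : Ep n → F) : ℝ :=
  ⨆ y : closedBall (0 : Ep n) 1, ‖fderiv ℝ f (y : Ep n)‖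

/-- `‖∇²f‖_∞ = sup_{|x'| ≤ 1} |∇²f(x')|`. -/
def hessSup {F : Type*} [NormedAddCommGroup F] [NormedSpace ℝ F] (n : ℕ) (f : Ep n → F) : ℝ :=
  ⨆ y : closedBall (0 : Ep n) 1, ‖fderiv ℝ (fderiv ℝ f) (y : Ep n)‖

/-- The geometric hypotheses on `h1, h2`: `C²` on the closed unit ball, the two graphs
do not touch, flatness at the origin, strict convexity of the gap, and `C²`-bound `κ1`. -/
def HGeom (n : ℕ) (ε κ0 κ1 : ℝ) (h1 h2 : Ep n → ℝ) : Prop :=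
  ContDiffOn ℝ 2 h1 (closedBall 0 1) ∧ ContDiffOn ℝ 2 h2 (closedBall 0 1) ∧
  (∀ y : Ep n, ‖y‖ ≤ 1 → -ε/2 + h2 y < ε/2 + h1 y) ∧
  h1 0 = 0 ∧ h2 0 = 0 ∧ fderiv ℝ h1 0 = 0 ∧ fderiv ℝ h2 0 = 0 ∧
  (∀ v : Ep n, κ0 * ‖v‖^2 ≤ fderiv ℝ (fderiv ℝ (fun y => h1 y - h2 y)) 0 v v) ∧
  C2norm n h1 + C2norm n h2 ≤ κ1

/-- Comparability `(ε + |x'|²)/C₀ ≤ δ(x') ≤ C₀ (ε + |x'|²)`. -/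
def DeltaComp (n : ℕ) (ε C₀ : ℝ) (h1 h2 : Ep n → ℝ) : Prop :=
  ∀ y : Ep n, ‖y‖ ≤ 1 →
    (ε + ‖y‖^2) / C₀ ≤ ε + h1 y - h2 y ∧ ε + h1 y - h2 y ≤ C₀ * (ε + ‖y‖^2)

/-- Hypotheses on the coefficients: `C²`-regularity with total `C²(Ω₁)`-norm at most `κ2`,
boundedness `|A| ≤ Λ`, and the weak ellipticity (Legendre) condition with constant `λ`. -/
def CoeffHyp (n N : ℕ) (ε lam Lam κ2 : ℝ) (h1 h2 : Ep n → ℝ)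
    (A : Fin n → Fin n → Fin N → Fin N → Efull n → ℝ)
    (B : Fin n → Fin N → Fin N → Efull n → ℝ)
    (Cc : Fin n → Fin N → Fin N → Efull n → ℝ)
    (Dc : Fin N → Fin N → Efull n → ℝ) : Prop :=
  (∀ α β i j, ContDiffOn ℝ 2 (A α β i j) (Omega n ε h1 h2 1)) ∧
  (∀ α i j, ContDiffOn ℝ 2 (B α i j) (Omega n ε h1 h2 1)) ∧
  (∀ β i j, ContDiffOn ℝ 2 (Cc β i j) (Omega n ε h1 h2 1)) ∧
  (∀ i j, ContDiffOn ℝ 2 (Dc i j) (Omega n ε h1 h2 1)) ∧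
  ((∑ α : Fin n, ∑ β : Fin n, ∑ i : Fin N, ∑ j : Fin N,
      C2normOn n (Omega n ε h1 h2 1) (A α β i j)) +
   (∑ α : Fin n, ∑ i : Fin N, ∑ j : Fin N, C2normOn n (Omega n ε h1 h2 1) (B α i j)) +
   (∑ β : Fin n, ∑ i : Fin N, ∑ j : Fin N, C2normOn n (Omega n ε h1 h2 1) (Cc β i j)) +
   (∑ i : Fin N, ∑ j : Fin N, C2normOn n (Omega n ε h1 h2 1) (Dc i j)) ≤ κ2) ∧
  (∀ α β i j, ∀ x ∈ Omega n ε h1 h2 1, |A α β i j x| ≤ Lam) ∧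
  (∀ ξ : Efull n → EuclideanSpace ℝ (Fin N), ContDiff ℝ (⊤ : ℕ∞) ξ →
    HasCompactSupport ξ → tsupport ξ ⊆ Omega n ε h1 h2 1 →
    lam * ∫ x in Omega n ε h1 h2 1, ‖fderiv ℝ ξ x‖^2 ≤
      ∫ x in Omega n ε h1 h2 1,
        ∑ α : Fin n, ∑ β : Fin n, ∑ i : Fin N, ∑ j : Fin N,
          A α β i j x * fderiv ℝ ξ x (dir n α) i * fderiv ℝ ξ x (dir n β) j)

/-- `u` is a weak solution of
`∂_α(A^{αβ}_{ij} ∂_β u^j + B^α_{ij} u^j) + C^β_{ij} ∂_β u^j + D_{ij} u^j = 0` in `Ω₁`. -/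
def WeakSol (n N : ℕ) (ε : ℝ) (h1 h2 : Ep n → ℝ)
    (A : Fin n → Fin n → Fin N → Fin N → Efull n → ℝ)
    (B : Fin n → Fin N → Fin N → Efull n → ℝ)
    (Cc : Fin n → Fin N → Fin N → Efull n → ℝ)
    (Dc : Fin N → Fin N → Efull n → ℝ)
    (u : Efull n → EuclideanSpace ℝ (Fin N)) : Prop :=
  ContDiffOn ℝ 1 u (Omega n ε h1 h2 1) ∧
  IntegrableOn (fun x => ‖u x‖^2 + ‖fderiv ℝ u x‖^2) (Omega n ε h1 h2 1) ∧
  ∀ ζ : Efull n → EuclideanSpace ℝ (Fin N), ContDiff ℝ (⊤ : ℕ∞) ζ →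
    HasCompactSupport ζ → tsupport ζ ⊆ Omega n ε h1 h2 1 →
    (∫ x in Omega n ε h1 h2 1,
      ((∑ α : Fin n, ∑ i : Fin N,
          ((∑ β : Fin n, ∑ j : Fin N, A α β i j x * fderiv ℝ u x (dir n β) j) +
            ∑ j : Fin N, B α i j x * u x j) * fderiv ℝ ζ x (dir n α) i) -
        ∑ i : Fin N,
          ((∑ β : Fin n, ∑ j : Fin N, Cc β i j x * fderiv ℝ u x (dir n β) j) +
            ∑ j : Fin N, Dc i j x * u x j) * ζ x i)) = 0

/-- `u` attains the boundary values `(φ, ψ)` on `Γ₁⁺` and `Γ₁⁻`. -/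
def AttainsBV {F : Type*} [NormedAddCommGroup F] [NormedSpace ℝ F] (n : ℕ) (ε : ℝ)
    (h1 h2 : Ep n → ℝ) (u : Efull n → F) (φ ψ : Ep n → F) : Prop :=
  ContinuousOn u (Omega n ε h1 h2 1 ∪ Gammap n ε h1 1 ∪ Gammam n ε h2 1) ∧
  (∀ y : Ep n, ‖y‖ ≤ 1 → u (y, ε/2 + h1 y) = φ y ∧ u (y, -ε/2 + h2 y) = ψ y)

/-- `u` is a harmonic function on `Ω₁` with boundary values `φ` on `Γ₁⁺` and `ψ` on `Γ₁⁻`. -/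
def HarmBV (n : ℕ) (ε : ℝ) (h1 h2 : Ep n → ℝ) (u : Efull n → ℝ) (φ ψ : Ep n → ℝ) : Prop :=
  ContDiffOn ℝ 2 u (Omega n ε h1 h2 1) ∧
  (∀ x ∈ Omega n ε h1 h2 1, lapl n u x = 0) ∧
  IntegrableOn (fun x => ‖u x‖^2 + ‖fderiv ℝ u x‖^2) (Omega n ε h1 h2 1) ∧
  AttainsBV n ε h1 h2 u φ ψ

section

open Filter Topology

/-! ### The `C²` norm, and integration tools -/

/-- The set defining `C2norm` is bounded, so that the supremum is not a junk value. On the boundary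
sphere `fderiv` is the unrestricted derivative, which need not exist there. -/
lemma C2norm_bddAbove {n : ℕ} {f : Ep n → ℝ} (hf : ContDiffOn ℝ 2 f (closedBall 0 1)) :
    BddAbove (Set.range fun y : closedBall (0 : Ep n) 1 =>
      ‖f (y : Ep n)‖ + ‖fderiv ℝ f (y : Ep n)‖ + ‖fderiv ℝ (fderiv ℝ f) (y : Ep n)‖) := by
  set B : Set (Ep n) := closedBall 0 1 with hB
  have hne : (interior B).Nonempty :=
    ⟨0, mem_interior_iff_mem_nhds.2 (closedBall_mem_nhds _ one_pos)⟩
  have hU : UniqueDiffOn ℝ B := uniqueDiffOn_convex (convex_closedBall _ _) hne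
  have hf1 : ContDiffOn ℝ 1 (fderivWithin ℝ f B) B := hf.fderivWithin hU (by norm_num)
  have hf2 : ContinuousOn (fderivWithin ℝ (fderivWithin ℝ f B) B) B :=
    hf1.continuousOn_fderivWithin hU (by norm_num)
  have hc : IsCompact B := isCompact_closedBall _ _
  obtain ⟨a, ha⟩ := hc.exists_bound_of_continuousOn hf.continuousOn
  obtain ⟨b, hb⟩ := hc.exists_bound_of_continuousOn hf1.continuousOn
  obtain ⟨c, hc'⟩ := hc.exists_bound_of_continuousOn (E := Ep n →L[ℝ] Ep n →L[ℝ] ℝ) hf2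
  refine ⟨a + b + c, ?_⟩
  rintro _ ⟨⟨y, hy⟩, rfl⟩
  have hb0 : 0 ≤ b := (norm_nonneg _).trans (hb y hy)
  have hc0 : 0 ≤ c := (norm_nonneg _).trans (hc' y hy)
  have e1 : ‖fderiv ℝ f y‖ ≤ b := by
    by_cases h : DifferentiableAt ℝ f y
    · rw [← h.fderivWithin (hU y hy)]; exact hb y hy
    · rw [fderiv_zero_of_not_differentiableAt h]; simpa using hb0
  have e2 : ‖fderiv ℝ (fderiv ℝ f) y‖ ≤ c := by
    by_cases h : DifferentiableAt ℝ (fderiv ℝ f) y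
    · have hcl : y ∈ closure (ball (0 : Ep n) 1) := by
        rw [closure_ball _ one_ne_zero]; exact hy
      have hUb : UniqueDiffWithinAt ℝ (ball (0 : Ep n) 1) y := by
        apply uniqueDiffWithinAt_convex (convex_ball _ _) _ hcl
        rw [isOpen_ball.interior_eq]; exact ⟨0, by simp⟩
      have heq : ∀ x ∈ ball (0 : Ep n) 1, fderivWithin ℝ f B x = fderiv ℝ f x := by
        intro x hx
        exact fderivWithin_of_mem_nhds
          (mem_of_superset (isOpen_ball.mem_nhds hx) ball_subset_closedBall)
      have hy' : fderivWithin ℝ f B y = fderiv ℝ f y := by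
        have : (𝓝[ball (0 : Ep n) 1] y).NeBot := mem_closure_iff_nhdsWithin_neBot.1 hcl
        have t1 : Tendsto (fderivWithin ℝ f B) (𝓝[ball (0 : Ep n) 1] y)
            (𝓝 (fderivWithin ℝ f B y)) :=
          ((hf1.continuousOn y hy).mono ball_subset_closedBall)
        have t2 : Tendsto (fderiv ℝ f) (𝓝[ball (0 : Ep n) 1] y) (𝓝 (fderiv ℝ f y)) :=
          h.continuousAt.continuousWithinAt
        refine tendsto_nhds_unique (t1.congr' ?_) t2
        filter_upwards [self_mem_nhdsWithin] with x hx using heq x hx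
      have d1 : HasFDerivWithinAt (fderiv ℝ f) (fderiv ℝ (fderiv ℝ f) y)
          (ball (0 : Ep n) 1) y := h.hasFDerivAt.hasFDerivWithinAt
      have d2 : HasFDerivWithinAt (fderivWithin ℝ f B)
          (fderivWithin ℝ (fderivWithin ℝ f B) B y) (ball (0 : Ep n) 1) y :=
        ((hf1.differentiableOn (by norm_num) y hy).hasFDerivWithinAt).mono ball_subset_closedBall
      have d3 := d1.congr heq hy'
      rw [hUb.eq d3 d2]
      exact hc' y hy
    · rw [fderiv_zero_of_not_differentiableAt h]
      exact (norm_zero (E := Ep n →L[ℝ] Ep n →L[ℝ] ℝ)).le.trans hc0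
  have := ha y hy
  simp only
  linarith

lemma C2norm_nonneg {n : ℕ} (f : Ep n → ℝ) : 0 ≤ C2norm n f :=
  Real.iSup_nonneg fun _ => by positivity

lemma C2norm_bounds {n : ℕ} {f : Ep n → ℝ} (hf : ContDiffOn ℝ 2 f (closedBall 0 1))
    {y : Ep n} (hy : ‖y‖ ≤ 1) :
    |f y| ≤ C2norm n f ∧ ‖fderiv ℝ f y‖ ≤ C2norm n f ∧
      ‖fderiv ℝ (fderiv ℝ f) y‖ ≤ C2norm n f := by
  have h := le_ciSup (C2norm_bddAbove hf) ⟨y, by simpa using hy⟩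
  simp only [Real.norm_eq_abs] at h
  have h' : |f y| + ‖fderiv ℝ f y‖ + ‖fderiv ℝ (fderiv ℝ f) y‖ ≤ C2norm n f := h
  have := abs_nonneg (f y)
  have := norm_nonneg (fderiv ℝ f y)
  have := norm_nonneg (fderiv ℝ (fderiv ℝ f) y)
  refine ⟨?_, ?_, ?_⟩ <;> linarith

/-- On the zero set of a differentiable function the derivative vanishes almost everywhere. -/
lemma ae_fderiv_eq_zero_of_zero {X : Type*} [NormedAddCommGroup X] [NormedSpace ℝ X]
    [FiniteDimensional ℝ X] [MeasurableSpace X] [BorelSpace X] (μ : Measure X)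
    [μ.IsAddHaarMeasure] {Ω : Set X} (hΩ : IsOpen Ω) {w : X → ℝ}
    (hw : DifferentiableOn ℝ w Ω) :
    ∀ᵐ x ∂μ.restrict Ω, w x = 0 → fderiv ℝ w x = 0 := by
  set s : Set X := Ω ∩ {x | w x = 0} with hs
  have hsm : MeasurableSet s := by
    have : s = Ω \ (Ω ∩ w ⁻¹' {0}ᶜ) := by ext x; simp [hs]
    rw [this]
    exact hΩ.measurableSet.diff
      (hw.continuousOn.isOpen_inter_preimage hΩ isOpen_compl_singleton).measurableSet
  have key : ∀ e : X, ∀ᵐ x ∂μ.restrict s, (fderiv ℝ w x).smulRight e = 0 := by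
    intro e
    have h1 : ApproximatesLinearOn (fun x => w x • e) (0 : X →L[ℝ] X) s 0 := by
      intro x hx y hy
      have hx' : w x = 0 := hx.2
      have hy' : w y = 0 := hy.2
      simp [hx', hy']
    have h2 := h1.norm_fderiv_sub_le μ hsm (fun x => (fderiv ℝ w x).smulRight e) (by
      intro x hx
      exact ((hw.differentiableAt (hΩ.mem_nhds hx.1)).hasFDerivAt.smul_const e).hasFDerivWithinAt)
    filter_upwards [h2] with x hx
    simpa only [sub_zero, nonpos_iff_eq_zero, nnnorm_eq_zero] using hx
  by_cases hX : ∃ e : X, e ≠ 0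
  · obtain ⟨e, he⟩ := hX
    have h3 := (ae_restrict_iff' hsm).1 (key e)
    rw [ae_restrict_iff' hΩ.measurableSet]
    filter_upwards [h3] with x hx hxΩ hx0
    have h4 := hx ⟨hxΩ, hx0⟩
    ext v
    have h5 := DFunLike.congr_fun h4 v
    simpa [he] using h5
  · push Not at hX
    refine Eventually.of_forall fun x _ => ?_
    ext v
    rw [hX v]; simp

lemma integral_fderiv_eq_zero_of_compact {X : Type*} [NormedAddCommGroup X] [NormedSpace ℝ X]
    [FiniteDimensional ℝ X] [MeasurableSpace X] [BorelSpace X] (μ : Measure X)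
    [μ.IsAddHaarMeasure] {V : X → ℝ} (hV : ContDiff ℝ 1 V) (hc : HasCompactSupport V) (v : X) :
    Integrable (fun x => fderiv ℝ V x v) μ ∧ ∫ x, fderiv ℝ V x v ∂μ = 0 := by
  have hc' : HasCompactSupport (fun x => fderiv ℝ V x v) := hc.fderiv_apply ℝ v
  have hcont : Continuous (fun x => fderiv ℝ V x v) :=
    (hV.continuous_fderiv (by norm_num)).clm_apply continuous_const
  have hi := hcont.integrable_of_hasCompactSupport hc' (μ := μ)
  refine ⟨hi, ?_⟩
  have h := integral_mul_fderiv_eq_neg_fderiv_mul_of_integrable (μ := μ) (v := v)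
    (f := fun _ : X => (1 : ℝ)) (g := V) (by simp) (by simpa using hi)
    (by simpa using hV.continuous.integrable_of_hasCompactSupport hc)
    (fun x _ => by fun_prop) (fun x _ => (hV.differentiable (by norm_num)).differentiableAt)
  simpa using h

/-- A `C¹` truncation: it vanishes near `0`, is the identity far away, and has bounded slope. -/
lemma exists_truncation : ∃ G : ℝ → ℝ, ∃ M : ℝ, 1 ≤ M ∧ ContDiff ℝ 1 G ∧
    (∀ s, |s| ≤ 1 → G s = 0) ∧ (∀ s, |G s| ≤ |s|) ∧ (∀ s, |deriv G s| ≤ M) ∧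
    (∀ s, 2 < |s| → G s = s ∧ deriv G s = 1) := by
  let b : ContDiffBump (0 : ℝ) := ⟨1, 2, one_pos, one_lt_two⟩
  have hbd : ContDiff ℝ 1 (fun s => b s) := b.contDiff
  have hsb : ContDiff ℝ 1 (fun s : ℝ => s * b s) := contDiff_id.mul hbd
  have hcs : HasCompactSupport (fun s : ℝ => s * b s) := b.hasCompactSupport.mul_left
  obtain ⟨M, hM⟩ := (hsb.continuous_deriv (by norm_num)).bounded_above_of_compact_support hcs.deriv
  have hM0 : 0 ≤ M := (norm_nonneg _).trans (hM 0)
  refine ⟨fun s => s - s * b s, 1 + M, by linarith, contDiff_id.sub hsb, ?_, ?_, ?_, ?_⟩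
  · intro s hs
    simp only [b.one_of_mem_closedBall (by simpa using hs)]; ring
  · intro s
    have h1 : 0 ≤ b s := b.nonneg
    have h2 : b s ≤ 1 := b.le_one
    have : s - s * b s = s * (1 - b s) := by ring
    simp only [this]
    rw [abs_mul, abs_of_nonneg (by linarith : 0 ≤ 1 - b s)]
    exact mul_le_of_le_one_right (abs_nonneg _) (by linarith)
  · intro s
    have hd : DifferentiableAt ℝ (fun s : ℝ => s * b s) s :=
      (hsb.differentiable (by norm_num)).differentiableAt
    rw [deriv_fun_sub differentiableAt_fun_id hd, deriv_id'']
    have := hM s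
    rw [Real.norm_eq_abs] at this
    exact (abs_sub _ _).trans (by rw [abs_one]; linarith)
  · intro s hs
    have hz : ∀ r : ℝ, 2 < |r| → r - r * b r = r := by
      intro r hr
      rw [b.zero_of_le_dist (by simpa [b] using hr.le)]; ring
    refine ⟨hz s hs, ?_⟩
    have : (fun s : ℝ => s - s * b s) =ᶠ[𝓝 s] id := by
      filter_upwards [(isOpen_lt continuous_const continuous_abs).mem_nhds hs] with r hr
      exact hz r hr
    rw [this.deriv_eq]; simp

/-! ### The divergence theorem with a truncated factor -/

lemma contDiff_indicator_of_compact {X : Type*} [NormedAddCommGroup X] [NormedSpace ℝ X]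
    {Ω K : Set X} (hΩ : IsOpen Ω) (hK : IsCompact K) (hKΩ : K ⊆ Ω) {f : X → ℝ}
    (hf : ContDiffOn ℝ 1 f Ω) (h0 : ∀ x ∈ Ω, x ∉ K → f x = 0) :
    ContDiff ℝ 1 (Ω.indicator f) ∧ HasCompactSupport (Ω.indicator f) ∧
      ∀ x v, fderiv ℝ (Ω.indicator f) x v = Ω.indicator (fun x => fderiv ℝ f x v) x := by
  have hz : ∀ x ∉ K, Ω.indicator f x = 0 := by
    intro x hx
    by_cases hxΩ : x ∈ Ω
    · rw [Set.indicator_of_mem hxΩ]; exact h0 x hxΩ hx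
    · exact Set.indicator_of_notMem hxΩ f
  have e1 : ∀ x ∈ Ω, Ω.indicator f =ᶠ[𝓝 x] f := by
    intro x hx
    filter_upwards [hΩ.mem_nhds hx] with y hy using Set.indicator_of_mem hy f
  have e2 : ∀ x ∉ K, Ω.indicator f =ᶠ[𝓝 x] fun _ => 0 := by
    intro x hx
    filter_upwards [hK.isClosed.isOpen_compl.mem_nhds hx] with y hy using hz y hy
  refine ⟨contDiff_iff_contDiffAt.2 fun x => ?_, HasCompactSupport.intro hK (fun x hx => hz x hx),
    fun x v => ?_⟩
  · by_cases hx : x ∈ Ω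
    · exact (hf.contDiffAt (hΩ.mem_nhds hx)).congr_of_eventuallyEq (e1 x hx)
    · exact contDiffAt_const.congr_of_eventuallyEq (e2 x fun h => hx (hKΩ h))
  · by_cases hx : x ∈ Ω
    · rw [(e1 x hx).fderiv_eq, Set.indicator_of_mem hx]
    · rw [(e2 x fun h => hx (hKΩ h)).fderiv_eq, Set.indicator_of_notMem hx]
      simp

/-- The divergence theorem for the field `η² w p` on `Ω`. The only boundary information is that
`{|w| ≥ t}` meets the support of `η` in a compact subset of `Ω` for each `t > 0`; no regularity of
`∇ w` up to the boundary is needed, because `w` is first replaced by a truncation vanishing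
for `|w| ≤ t`. -/
lemma key_identity {X : Type*} [NormedAddCommGroup X] [NormedSpace ℝ X]
    [FiniteDimensional ℝ X] [MeasurableSpace X] [BorelSpace X] (μ : Measure X)
    [μ.IsAddHaarMeasure] {ι : Type*} [Fintype ι] (d : ι → X) {Ω : Set X} (hΩ : IsOpen Ω)
    {w η : X → ℝ} {p : ι → X → ℝ} (hw : ContDiffOn ℝ 1 w Ω) (hη : ContDiff ℝ 1 η)
    (hp : ∀ i, ContDiffOn ℝ 1 (p i) Ω)
    (hK : ∀ t > 0, ∃ K, IsCompact K ∧ K ⊆ Ω ∧ ∀ x ∈ Ω, η x ≠ 0 → t ≤ |w x| → x ∈ K)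
    {B : ℝ} (hB : ∀ x, |η x| ≤ B) (hB' : ∀ x i, |fderiv ℝ η x (d i)| ≤ B)
    (I1 : ∀ i, IntegrableOn (fun x => w x * p i x) Ω μ)
    (I2 : ∀ i, IntegrableOn (fun x => fderiv ℝ w x (d i) * p i x) Ω μ)
    (I3 : IntegrableOn (fun x => w x * ∑ i, fderiv ℝ (p i) x (d i)) Ω μ) :
    ∫ x in Ω, ((∑ i, (2 * η x * fderiv ℝ η x (d i) * (w x * p i x)
        + η x ^ 2 * (fderiv ℝ w x (d i) * p i x)))
        + η x ^ 2 * (w x * ∑ i, fderiv ℝ (p i) x (d i))) ∂μ = 0 := by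
  obtain ⟨G, M, hM1, hG, hG0, hGle, hG', hGbig⟩ := exists_truncation
  have hwc := hw.continuousOn
  have hwd : ∀ x ∈ Ω, HasFDerivAt w (fderiv ℝ w x) x := fun x hx =>
    ((hw.differentiableOn (by norm_num)).differentiableAt (hΩ.mem_nhds hx)).hasFDerivAt
  have hpd : ∀ i, ∀ x ∈ Ω, HasFDerivAt (p i) (fderiv ℝ (p i) x) x := fun i x hx =>
    (((hp i).differentiableOn (by norm_num)).differentiableAt (hΩ.mem_nhds hx)).hasFDerivAt
  have hηd : ∀ x, HasFDerivAt η (fderiv ℝ η x) x := fun x =>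
    (hη.differentiable (by norm_num)).differentiableAt.hasFDerivAt
  -- `F t` is the integrand for the truncation `t G(w/t)` of `w`, and `V t` the field itself
  let F : ℝ → X → ℝ := fun t x =>
    (∑ i, (2 * η x * fderiv ℝ η x (d i) * (t * G (w x / t) * p i x)
        + η x ^ 2 * (deriv G (w x / t) * (fderiv ℝ w x (d i) * p i x))))
        + η x ^ 2 * (t * G (w x / t) * ∑ i, fderiv ℝ (p i) x (d i))
  let V : ℝ → ι → X → ℝ := fun t i x => η x ^ 2 * (t * G (w x / t)) * p i x
  have hVd : ∀ t > 0, ∀ i, ∀ x ∈ Ω, fderiv ℝ (V t i) x (d i) =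
      2 * η x * fderiv ℝ η x (d i) * (t * G (w x / t) * p i x)
        + η x ^ 2 * (deriv G (w x / t) * (fderiv ℝ w x (d i) * p i x))
        + η x ^ 2 * (t * G (w x / t) * fderiv ℝ (p i) x (d i)) := by
    intro t ht i x hx
    have h1 : HasDerivAt G (deriv G (w x / t)) (w x / t) :=
      (hG.differentiable (by norm_num)).differentiableAt.hasDerivAt
    have h2 : HasFDerivAt (fun y => w y / t) (t⁻¹ • fderiv ℝ w x) x := by
      simpa [div_eq_inv_mul] using (hwd x hx).const_mul t⁻¹
    have h3 := (h1.comp_hasFDerivAt x h2).const_mul t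
    have h4 := (((hηd x).pow 2).mul h3).mul (hpd i x hx)
    have h5 : HasFDerivAt (V t i) _ x := h4
    rw [h5.fderiv]
    simp
    field_simp
    ring
  have hVc : ∀ t > 0, ∀ i, ContDiffOn ℝ 1 (V t i) Ω := by
    intro t ht i
    have h2 : ContDiffOn ℝ 1 (fun y => w y / t) Ω := hw.div_const t
    have h3 : ContDiffOn ℝ 1 (fun y => G (w y / t)) Ω := hG.comp_contDiffOn h2
    exact ((hη.contDiffOn.pow 2).mul (contDiffOn_const.mul h3)).mul (hp i)
  have hF0 : ∀ t > 0, ∫ x in Ω, F t x ∂μ = 0 := by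
    intro t ht
    obtain ⟨K, hKc, hKΩ, hKw⟩ := hK t ht
    have hVz : ∀ i, ∀ x ∈ Ω, x ∉ K → V t i x = 0 := by
      intro i x hx hxK
      by_cases hηx : η x = 0
      · simp [V, hηx]
      · have : |w x| < t := by
          by_contra h
          exact hxK (hKw x hx hηx (not_lt.1 h))
        have : G (w x / t) = 0 := by
          apply hG0
          rw [abs_div, abs_of_pos ht, div_le_one ht]; exact this.le
        simp [V, this]
    have hI := fun i => contDiff_indicator_of_compact hΩ hKc hKΩ (hVc t ht i) (hVz i)
    have hJ := fun i => integral_fderiv_eq_zero_of_compact μ (hI i).1 (hI i).2.1 (d i)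
    have : ∀ x ∈ Ω, F t x = ∑ i, fderiv ℝ (Ω.indicator (V t i)) x (d i) := by
      intro x hx
      simp only [(hI _).2.2, Set.indicator_of_mem hx, hVd t ht _ x hx, F]
      rw [Finset.sum_add_distrib (f := fun i => _ + _), ← Finset.mul_sum, ← Finset.mul_sum]
    rw [setIntegral_congr_fun hΩ.measurableSet this, integral_finsetSum]
    · refine Finset.sum_eq_zero fun i _ => ?_
      rw [← (hJ i).2]
      apply setIntegral_eq_integral_of_forall_compl_eq_zero
      intro x hx
      rw [(hI i).2.2, Set.indicator_of_notMem hx]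
    · intro i _
      exact (hJ i).1.integrableOn
  have hB0 : 0 ≤ B := (abs_nonneg _).trans (hB 0)
  let bd : X → ℝ := fun x => (∑ i, (2 * B * B * |w x * p i x|
        + B ^ 2 * (M * |fderiv ℝ w x (d i) * p i x|)))
        + B ^ 2 * |w x * ∑ i, fderiv ℝ (p i) x (d i)|
  have hbd : IntegrableOn bd Ω μ := by
    refine Integrable.add (integrable_finsetSum _ fun i _ => Integrable.add ?_ ?_) ?_
    · exact (I1 i).abs.const_mul _
    · exact ((I2 i).abs.const_mul _).const_mul _
    · exact I3.abs.const_mul _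
  have hGt : ∀ t > 0, ∀ s, |t * G (s / t)| ≤ |s| := by
    intro t ht s
    rw [abs_mul, abs_of_pos ht]
    calc t * |G (s / t)| ≤ t * |s / t| := mul_le_mul_of_nonneg_left (hGle _) ht.le
      _ = |s| := by rw [abs_div, abs_of_pos ht]; field_simp
  have hη2 : ∀ x, η x ^ 2 ≤ B ^ 2 := fun x => by
    rw [← sq_abs]; gcongr; exact hB x
  have hFbd : ∀ t > 0, ∀ x, ‖F t x‖ ≤ bd x := by
    intro t ht x
    rw [Real.norm_eq_abs]
    refine (abs_add_le _ _).trans (add_le_add ((Finset.abs_sum_le_sum_abs _ _).trans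
      (Finset.sum_le_sum fun i _ => (abs_add_le _ _).trans (add_le_add ?_ ?_))) ?_)
    · rw [abs_mul, abs_mul _ (p i x), abs_mul (w x), abs_mul, abs_mul, abs_two]
      exact mul_le_mul (mul_le_mul (mul_le_mul_of_nonneg_left (hB x) two_pos.le) (hB' x i)
        (abs_nonneg _) (by positivity)) (mul_le_mul_of_nonneg_right (hGt t ht _) (abs_nonneg _))
        (by positivity) (by positivity)
    · rw [abs_mul, abs_mul (deriv _ _), abs_of_nonneg (sq_nonneg (η x))]
      exact mul_le_mul (hη2 x) (mul_le_mul_of_nonneg_right (hG' _) (abs_nonneg _))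
        (by positivity) (by positivity)
    · rw [abs_mul, abs_mul, abs_mul (w x), abs_of_nonneg (sq_nonneg (η x))]
      exact mul_le_mul (hη2 x) (mul_le_mul_of_nonneg_right (hGt t ht _) (abs_nonneg _))
        (by positivity) (by positivity)
  have hηc := hη.continuous
  have hη'c : ∀ i, Continuous fun x => fderiv ℝ η x (d i) := fun i =>
    (hη.continuous_fderiv (by norm_num)).clm_apply continuous_const
  have hw'c : ∀ i, ContinuousOn (fun x => fderiv ℝ w x (d i)) Ω := fun i =>
    (hw.continuousOn_fderiv_of_isOpen hΩ (by norm_num)).clm_apply continuousOn_const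
  have hp'c : ∀ i, ContinuousOn (fun x => fderiv ℝ (p i) x (d i)) Ω := fun i =>
    ((hp i).continuousOn_fderiv_of_isOpen hΩ (by norm_num)).clm_apply continuousOn_const
  have hFm : ∀ t > 0, AEStronglyMeasurable (F t) (μ.restrict Ω) := by
    intro t ht
    refine ContinuousOn.aestronglyMeasurable ?_ hΩ.measurableSet
    have c1 : ContinuousOn (fun x => w x / t) Ω := hwc.div_const t
    have c2 : ContinuousOn (fun x => G (w x / t)) Ω := hG.continuous.comp_continuousOn c1
    have c3 : ContinuousOn (fun x => deriv G (w x / t)) Ω :=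
      (hG.continuous_deriv (by norm_num)).comp_continuousOn c1
    have c4 := fun i => (hp i).continuousOn
    have c5 := fun i => (hη'c i).continuousOn (s := Ω)
    have c6 := hηc.continuousOn (s := Ω)
    refine ContinuousOn.add (continuousOn_finsetSum _ fun i _ => ?_) ?_
    · exact (((continuousOn_const.mul c6).mul (c5 i)).mul
        ((continuousOn_const.mul c2).mul (c4 i))).add
        ((c6.pow 2).mul (c3.mul ((hw'c i).mul (c4 i))))
    · exact (c6.pow 2).mul ((continuousOn_const.mul c2).mul
        (continuousOn_finsetSum _ fun i _ => hp'c i))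
  let τ : ℕ → ℝ := fun k => 1 / ((k : ℝ) + 1)
  have hτ : ∀ k, 0 < τ k := fun k => by positivity
  have hτ0 : Tendsto τ atTop (𝓝 0) := tendsto_one_div_add_atTop_nhds_zero_nat
  have hlim : ∀ᵐ x ∂μ.restrict Ω, Tendsto (fun k => F (τ k) x) atTop
      (𝓝 ((∑ i, (2 * η x * fderiv ℝ η x (d i) * (w x * p i x)
        + η x ^ 2 * (fderiv ℝ w x (d i) * p i x)))
        + η x ^ 2 * (w x * ∑ i, fderiv ℝ (p i) x (d i)))) := by
    filter_upwards [ae_fderiv_eq_zero_of_zero μ hΩ (hw.differentiableOn (by norm_num))] with x hx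
    by_cases h0 : w x = 0
    · have hG00 : G 0 = 0 := hG0 0 (by simp)
      refine tendsto_const_nhds.congr fun k => ?_
      simp [F, h0, hx h0, hG00]
    · have hpos : 0 < |w x| / 2 := by positivity
      refine tendsto_const_nhds.congr' ?_
      filter_upwards [hτ0.eventually_lt_const hpos] with k hk
      have h2 : 2 < |w x / τ k| := by
        rw [abs_div, abs_of_pos (hτ k), lt_div_iff₀ (hτ k)]; linarith
      obtain ⟨g1, g2⟩ := hGbig _ h2
      have h3 : τ k * G (w x / τ k) = w x := by
        rw [g1]; field_simp [(hτ k).ne']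
      simp only [F, h3, g2, one_mul]
  have hT := tendsto_integral_of_dominated_convergence bd (fun k => hFm (τ k) (hτ k)) hbd
    (fun k => Eventually.of_forall fun x => hFbd (τ k) (hτ k) x) hlim
  refine tendsto_nhds_unique hT ?_
  simp only [hF0 _ (hτ _)]
  exact tendsto_const_nhds

/-! ### Coordinate directions and derivatives of the auxiliary functions -/

lemma sum_dir {M : Type*} [AddCommMonoid M] {n : ℕ} (hn : 2 ≤ n) (g : Efull n → M) :
    ∑ α, g (dir n α) = (∑ i, g (tang n i)) + g (vert n) := by
  obtain ⟨m, rfl⟩ : ∃ m, n = m + 1 := ⟨n - 1, by omega⟩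
  rw [Fin.sum_univ_castSucc]
  congr 1
  · refine Finset.sum_congr rfl fun i _ => ?_
    congr 1
    simp only [dir, tang]
    rw [dif_pos (by simp)]
    rfl
  · congr 1
    simp [dir, vert]

lemma dir_cases {n : ℕ} (α : Fin n) :
    (‖(dir n α).1‖ = 1 ∧ (dir n α).2 = 0) ∨ ((dir n α).1 = 0 ∧ (dir n α).2 = 1) := by
  unfold dir
  split_ifs
  · left; simp
  · right; simp

lemma norm_dir_le {n : ℕ} (α : Fin n) : ‖(dir n α).1‖ ≤ 1 ∧ |(dir n α).2| ≤ 1 := by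
  rcases dir_cases α with ⟨h, h'⟩ | ⟨h, h'⟩ <;> simp [h, h']

/-- The norm of `Efull n` is the maximum of the norms of the two components; its dual norm is
compared here with the Euclidean length of the gradient. -/
lemma clm_norm_sq_le {n : ℕ} (hn : 2 ≤ n) (L : Efull n →L[ℝ] ℝ) :
    ‖L‖ ^ 2 ≤ n * ∑ α, (L (dir n α)) ^ 2 := by
  have h1 : ‖L‖ ≤ ∑ α, |L (dir n α)| := by
    refine L.opNorm_le_bound (Finset.sum_nonneg fun _ _ => abs_nonneg _) fun x => ?_
    have hx : x = (∑ i, x.1 i • tang n i) + x.2 • vert n := by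
      ext j
      · simp [tang, vert, Finset.sum_apply, Prod.fst_sum, Pi.single_apply]
      · simp [tang, vert, Prod.snd_sum]
    have hL : L x = (∑ i, x.1 i * L (tang n i)) + x.2 * L (vert n) := by
      conv_lhs => rw [hx]
      simp
    rw [hL, sum_dir hn (fun v => |L v|), Real.norm_eq_abs, add_mul, Finset.sum_mul]
    refine (abs_add_le _ _).trans (add_le_add ((Finset.abs_sum_le_sum_abs _ _).trans
      (Finset.sum_le_sum fun i _ => ?_)) ?_)
    · rw [abs_mul, mul_comm]
      exact mul_le_mul_of_nonneg_left
        (((PiLp.norm_apply_le x.1 i).trans (norm_fst_le x))) (abs_nonneg _)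
    · rw [abs_mul, mul_comm]
      exact mul_le_mul_of_nonneg_left (norm_snd_le x) (abs_nonneg _)
  calc ‖L‖ ^ 2 ≤ (∑ α, |L (dir n α)|) ^ 2 := by gcongr
    _ ≤ (Finset.univ : Finset (Fin n)).card * ∑ α, |L (dir n α)| ^ 2 := sq_sum_le_card_mul_sum_sq
    _ = _ := by simp

lemma Omega_isOpen {n : ℕ} {ε : ℝ} {h1 h2 : Ep n → ℝ} (c1 : ContinuousOn h1 (closedBall 0 1))
    (c2 : ContinuousOn h2 (closedBall 0 1)) {r : ℝ} (hr : r ≤ 1) :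
    IsOpen (Omega n ε h1 h2 r) := by
  set U : Set (Efull n) := {x | ‖x.1‖ < r} with hU
  have hUo : IsOpen U := isOpen_lt (continuous_norm.comp continuous_fst) continuous_const
  have hm : Set.MapsTo Prod.fst U (closedBall (0 : Ep n) 1) := fun x hx => by
    have : ‖x.1‖ < r := hx
    simp; linarith
  have d1 : ContinuousOn (fun x : Efull n => h1 x.1) U := c1.comp continuousOn_fst hm
  have d2 : ContinuousOn (fun x : Efull n => h2 x.1) U := c2.comp continuousOn_fst hm
  have e1 : ContinuousOn (fun x : Efull n => x.2 - (-ε/2 + h2 x.1)) U :=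
    continuousOn_snd.sub (continuousOn_const.add d2)
  have e2 : ContinuousOn (fun x : Efull n => (ε/2 + h1 x.1) - x.2) U :=
    (continuousOn_const.add d1).sub continuousOn_snd
  have : Omega n ε h1 h2 r = (U ∩ (fun x : Efull n => x.2 - (-ε/2 + h2 x.1)) ⁻¹' Set.Ioi 0) ∩
      (U ∩ (fun x : Efull n => (ε/2 + h1 x.1) - x.2) ⁻¹' Set.Ioi 0) := by
    ext x
    simp only [Omega, Set.mem_ofPred_eq, Set.mem_inter_iff, Set.mem_preimage, Set.mem_Ioi, hU,
      sub_pos]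
    tauto
  rw [this]
  exact (e1.isOpen_inter_preimage hUo isOpen_Ioi).inter (e2.isOpen_inter_preimage hUo isOpen_Ioi)

lemma contDiffOn_comp_fst {n : ℕ} {f : Ep n → ℝ} (hf : ContDiffOn ℝ 2 f (closedBall 0 1))
    {S : Set (Efull n)} (hS : ∀ x ∈ S, ‖x.1‖ ≤ 1) :
    ContDiffOn ℝ 2 (fun x : Efull n => f x.1) S :=
  hf.comp contDiff_fst.contDiffOn fun x hx => by simpa using hS x hx

lemma util_contDiffOn {n : ℕ} {ε : ℝ} {h1 h2 φ ψ : Ep n → ℝ}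
    (g1 : ContDiffOn ℝ 2 h1 (closedBall 0 1)) (g2 : ContDiffOn ℝ 2 h2 (closedBall 0 1))
    (gφ : ContDiffOn ℝ 2 φ (closedBall 0 1)) (gψ : ContDiffOn ℝ 2 ψ (closedBall 0 1))
    (hpos : ∀ y : Ep n, ‖y‖ ≤ 1 → 0 < ε + h1 y - h2 y) {S : Set (Efull n)}
    (hS : ∀ x ∈ S, ‖x.1‖ ≤ 1) :
    ContDiffOn ℝ 2 (util n ε h1 h2 φ ψ) S := by
  have a1 := contDiffOn_comp_fst g1 hS
  have a2 := contDiffOn_comp_fst g2 hS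
  have a3 := contDiffOn_comp_fst gφ hS
  have a4 := contDiffOn_comp_fst gψ hS
  have q : ContDiffOn ℝ 2 (ubar n ε h1 h2) S :=
    ((contDiff_snd.contDiffOn.sub a2).add contDiffOn_const).div
      ((contDiffOn_const.add a1).sub a2) fun x hx => (hpos _ (hS x hx)).ne'
  exact (a3.mul q).add (a4.mul (contDiffOn_const.sub q))

lemma hasDerivAt_line1 {n : ℕ} {f : Ep n → ℝ} {x : Efull n} (v : Efull n)
    (hf : DifferentiableAt ℝ f x.1) :
    HasDerivAt (fun s : ℝ => f (x + s • v).1) (fderiv ℝ f x.1 v.1) 0 := by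
  have h1 : HasDerivAt (fun s : ℝ => (x + s • v).1) v.1 0 := by
    simpa using ((hasDerivAt_id (0 : ℝ)).smul_const v.1).const_add x.1
  have h2 : HasFDerivAt f (fderiv ℝ f x.1) (x + (0 : ℝ) • v).1 := by simpa using hf.hasFDerivAt
  exact h2.comp_hasDerivAt 0 h1

lemma hasDerivAt_line2 {n : ℕ} {f : Ep n → ℝ} {x : Efull n} (v : Efull n)
    (hf : DifferentiableAt ℝ (fderiv ℝ f) x.1) :
    HasDerivAt (fun s : ℝ => fderiv ℝ f (x + s • v).1 v.1)
      (fderiv ℝ (fderiv ℝ f) x.1 v.1 v.1) 0 := by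
  have h1 : HasDerivAt (fun s : ℝ => (x + s • v).1) v.1 0 := by
    simpa using ((hasDerivAt_id (0 : ℝ)).smul_const v.1).const_add x.1
  have h2 : HasFDerivAt (fderiv ℝ f) (fderiv ℝ (fderiv ℝ f) x.1) (x + (0 : ℝ) • v).1 := by
    simpa using hf.hasFDerivAt
  have h3 := h2.comp_hasDerivAt 0 h1
  simpa using h3.clm_apply (hasDerivAt_const (0 : ℝ) v.1)

lemma fderiv_eq_of_line {X : Type*} [NormedAddCommGroup X] [NormedSpace ℝ X] {F : X → ℝ} {x : X}
    (v : X) (hF : DifferentiableAt ℝ F x) {a : ℝ}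
    (h : HasDerivAt (fun s : ℝ => F (x + s • v)) a 0) : fderiv ℝ F x v = a := by
  have h1 : HasDerivAt (fun s : ℝ => x + s • v) v 0 := by
    simpa using ((hasDerivAt_id (0 : ℝ)).smul_const v).const_add x
  have h2 : HasFDerivAt F (fderiv ℝ F x) (x + (0 : ℝ) • v) := by simpa using hF.hasFDerivAt
  exact (h2.comp_hasDerivAt 0 h1).unique h

/-- The derivative of `ū` in the direction `v`. -/
def ubarD {n : ℕ} (ε : ℝ) (h1 h2 : Ep n → ℝ) (v x : Efull n) : ℝ :=
  (v.2 - fderiv ℝ h2 x.1 v.1 - ubar n ε h1 h2 x * (fderiv ℝ h1 x.1 v.1 - fderiv ℝ h2 x.1 v.1)) /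
    (ε + h1 x.1 - h2 x.1)

/-- The second derivative of `ū` in the direction `v`. -/
def ubarDD {n : ℕ} (ε : ℝ) (h1 h2 : Ep n → ℝ) (v x : Efull n) : ℝ :=
  (-fderiv ℝ (fderiv ℝ h2) x.1 v.1 v.1
    - 2 * ubarD ε h1 h2 v x * (fderiv ℝ h1 x.1 v.1 - fderiv ℝ h2 x.1 v.1)
    - ubar n ε h1 h2 x * (fderiv ℝ (fderiv ℝ h1) x.1 v.1 v.1
      - fderiv ℝ (fderiv ℝ h2) x.1 v.1 v.1)) / (ε + h1 x.1 - h2 x.1)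

/-- The derivative of `ũ` in the direction `v`. -/
def utilD {n : ℕ} (ε : ℝ) (h1 h2 φ ψ : Ep n → ℝ) (v x : Efull n) : ℝ :=
  fderiv ℝ φ x.1 v.1 * ubar n ε h1 h2 x + fderiv ℝ ψ x.1 v.1 * (1 - ubar n ε h1 h2 x)
    + (φ x.1 - ψ x.1) * ubarD ε h1 h2 v x

/-- The second derivative of `ũ` in the direction `v`. -/
def utilDD {n : ℕ} (ε : ℝ) (h1 h2 φ ψ : Ep n → ℝ) (v x : Efull n) : ℝ :=
  fderiv ℝ (fderiv ℝ φ) x.1 v.1 v.1 * ubar n ε h1 h2 x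
    + fderiv ℝ (fderiv ℝ ψ) x.1 v.1 v.1 * (1 - ubar n ε h1 h2 x)
    + 2 * (fderiv ℝ φ x.1 v.1 - fderiv ℝ ψ x.1 v.1) * ubarD ε h1 h2 v x
    + (φ x.1 - ψ x.1) * ubarDD ε h1 h2 v x

section lines
variable {n : ℕ} {ε : ℝ} {h1 h2 φ ψ : Ep n → ℝ} {x : Efull n} (v : Efull n)

lemma ubar_line (d1 : DifferentiableAt ℝ h1 x.1) (d2 : DifferentiableAt ℝ h2 x.1)
    (hpos : 0 < ε + h1 x.1 - h2 x.1) :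
    HasDerivAt (fun s : ℝ => ubar n ε h1 h2 (x + s • v)) (ubarD ε h1 h2 v x) 0 := by
  have a1 := hasDerivAt_line1 v d1
  have a2 := hasDerivAt_line1 v d2
  have a0 : HasDerivAt (fun s : ℝ => (x + s • v).2) v.2 0 := by
    simpa using ((hasDerivAt_id (0 : ℝ)).mul_const v.2).const_add x.2
  have hp' : ε + h1 (x + (0 : ℝ) • v).1 - h2 (x + (0 : ℝ) • v).1 ≠ 0 := by simpa using hpos.ne'
  have h := ((a0.sub a2).add_const (ε / 2)).div ((a1.const_add ε).sub a2) hp'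
  refine (h.congr_deriv ?_)
  simp only [zero_smul, add_zero, ubarD, ubar, Pi.sub_apply]
  field_simp

lemma ubarD_line (d1 : DifferentiableAt ℝ h1 x.1) (d2 : DifferentiableAt ℝ h2 x.1)
    (d1' : DifferentiableAt ℝ (fderiv ℝ h1) x.1) (d2' : DifferentiableAt ℝ (fderiv ℝ h2) x.1)
    (hpos : 0 < ε + h1 x.1 - h2 x.1) :
    HasDerivAt (fun s : ℝ => ubarD ε h1 h2 v (x + s • v)) (ubarDD ε h1 h2 v x) 0 := by
  have a1 := hasDerivAt_line1 v d1
  have a2 := hasDerivAt_line1 v d2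
  have b1 := hasDerivAt_line2 v d1'
  have b2 := hasDerivAt_line2 v d2'
  have q := ubar_line v d1 d2 hpos
  have hp' : ε + h1 (x + (0 : ℝ) • v).1 - h2 (x + (0 : ℝ) • v).1 ≠ 0 := by simpa using hpos.ne'
  have h := ((b2.const_sub v.2).sub (q.mul (b1.sub b2))).div ((a1.const_add ε).sub a2) hp'
  refine (h.congr_deriv ?_)
  simp only [zero_smul, add_zero, ubarDD, Pi.sub_apply, Pi.mul_apply]
  have e : v.2 - fderiv ℝ h2 x.1 v.1 - ubar n ε h1 h2 x *
      (fderiv ℝ h1 x.1 v.1 - fderiv ℝ h2 x.1 v.1) =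
      ubarD ε h1 h2 v x * (ε + h1 x.1 - h2 x.1) := by
    unfold ubarD; field_simp
  rw [e]
  field_simp
  ring

lemma util_line (d1 : DifferentiableAt ℝ h1 x.1) (d2 : DifferentiableAt ℝ h2 x.1)
    (d3 : DifferentiableAt ℝ φ x.1) (d4 : DifferentiableAt ℝ ψ x.1)
    (hpos : 0 < ε + h1 x.1 - h2 x.1) :
    HasDerivAt (fun s : ℝ => util n ε h1 h2 φ ψ (x + s • v)) (utilD ε h1 h2 φ ψ v x) 0 := by
  have a3 := hasDerivAt_line1 v d3
  have a4 := hasDerivAt_line1 v d4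
  have q := ubar_line v d1 d2 hpos
  refine ((a3.mul q).add (a4.mul (q.const_sub 1))).congr_deriv ?_
  simp only [zero_smul, add_zero, utilD]
  ring

lemma utilD_line (d1 : DifferentiableAt ℝ h1 x.1) (d2 : DifferentiableAt ℝ h2 x.1)
    (d3 : DifferentiableAt ℝ φ x.1) (d4 : DifferentiableAt ℝ ψ x.1)
    (d1' : DifferentiableAt ℝ (fderiv ℝ h1) x.1) (d2' : DifferentiableAt ℝ (fderiv ℝ h2) x.1)
    (d3' : DifferentiableAt ℝ (fderiv ℝ φ) x.1) (d4' : DifferentiableAt ℝ (fderiv ℝ ψ) x.1)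
    (hpos : 0 < ε + h1 x.1 - h2 x.1) :
    HasDerivAt (fun s : ℝ => utilD ε h1 h2 φ ψ v (x + s • v)) (utilDD ε h1 h2 φ ψ v x) 0 := by
  have a3 := hasDerivAt_line1 v d3
  have a4 := hasDerivAt_line1 v d4
  have b3 := hasDerivAt_line2 v d3'
  have b4 := hasDerivAt_line2 v d4'
  have q := ubar_line v d1 d2 hpos
  have q' := ubarD_line v d1 d2 d1' d2' hpos
  refine (((b3.mul q).add (b4.mul (q.const_sub 1))).add ((a3.sub a4).mul q')).congr_deriv ?_
  simp only [zero_smul, add_zero, utilDD, Pi.sub_apply]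
  ring

end lines

/-! ### The Laplacian of the interpolating function -/

lemma diff_of_C2 {n : ℕ} {f : Ep n → ℝ} (hf : ContDiffOn ℝ 2 f (closedBall 0 1)) {y : Ep n}
    (hy : ‖y‖ < 1) : DifferentiableAt ℝ f y ∧ DifferentiableAt ℝ (fderiv ℝ f) y := by
  have hn : closedBall (0 : Ep n) 1 ∈ 𝓝 y :=
    mem_of_superset (isOpen_ball.mem_nhds (by simpa using hy)) ball_subset_closedBall
  have h := hf.contDiffAt hn
  refine ⟨h.differentiableAt (by norm_num), ?_⟩
  exact (h.fderiv_right (m := 1) (by norm_num)).differentiableAt (by norm_num)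

lemma norm_fderiv_le_mul_norm {n : ℕ} {f : Ep n → ℝ} (hf : ContDiffOn ℝ 2 f (closedBall 0 1))
    (h0 : fderiv ℝ f 0 = 0) {κ : ℝ} (hκ : C2norm n f ≤ κ) {y : Ep n} (hy : ‖y‖ < 1) :
    ‖fderiv ℝ f y‖ ≤ κ * ‖y‖ := by
  have h := (convex_ball (0 : Ep n) 1).norm_image_sub_le_of_norm_fderiv_le (𝕜 := ℝ)
    (f := fderiv ℝ f) (C := κ) (x := 0) (y := y)
    (fun z hz => (diff_of_C2 hf (by simpa using hz)).2)
    (fun z hz => ((C2norm_bounds hf (by simpa using (mem_ball_zero_iff.1 hz).le)).2.2).trans hκ)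
    (by simp) (by simpa using hy)
  simpa [h0] using h

lemma fderiv_util
    {n : ℕ} {ε : ℝ} {h1 h2 φ ψ : Ep n → ℝ}
    (g1 : ContDiffOn ℝ 2 h1 (closedBall 0 1)) (g2 : ContDiffOn ℝ 2 h2 (closedBall 0 1))
    (gφ : ContDiffOn ℝ 2 φ (closedBall 0 1)) (gψ : ContDiffOn ℝ 2 ψ (closedBall 0 1))
    (hpos : ∀ y : Ep n, ‖y‖ ≤ 1 → 0 < ε + h1 y - h2 y)
    {x : Efull n} (hx : x ∈ Omega n ε h1 h2 1) (v : Efull n) :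
    fderiv ℝ (util n ε h1 h2 φ ψ) x v = utilD ε h1 h2 φ ψ v x := by
  have hO := Omega_isOpen (ε := ε) g1.continuousOn g2.continuousOn le_rfl
  have hC := util_contDiffOn g1 g2 gφ gψ hpos (S := Omega n ε h1 h2 1) (fun x hx => hx.1.le)
  exact fderiv_eq_of_line v ((hC.differentiableOn (by norm_num)).differentiableAt
    (hO.mem_nhds hx)) (util_line v (diff_of_C2 g1 hx.1).1 (diff_of_C2 g2 hx.1).1
    (diff_of_C2 gφ hx.1).1 (diff_of_C2 gψ hx.1).1 (hpos _ hx.1.le))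

lemma fderiv_fderiv_util
    {n : ℕ} {ε : ℝ} {h1 h2 φ ψ : Ep n → ℝ}
    (g1 : ContDiffOn ℝ 2 h1 (closedBall 0 1)) (g2 : ContDiffOn ℝ 2 h2 (closedBall 0 1))
    (gφ : ContDiffOn ℝ 2 φ (closedBall 0 1)) (gψ : ContDiffOn ℝ 2 ψ (closedBall 0 1))
    (hpos : ∀ y : Ep n, ‖y‖ ≤ 1 → 0 < ε + h1 y - h2 y)
    {x : Efull n} (hx : x ∈ Omega n ε h1 h2 1) (v : Efull n) :
    fderiv ℝ (fun y => fderiv ℝ (util n ε h1 h2 φ ψ) y v) x v = utilDD ε h1 h2 φ ψ v x := by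
  have hO := Omega_isOpen (ε := ε) g1.continuousOn g2.continuousOn le_rfl
  have hC := util_contDiffOn g1 g2 gφ gψ hpos (S := Omega n ε h1 h2 1) (fun x hx => hx.1.le)
  have hd : DifferentiableAt ℝ (fun y => fderiv ℝ (util n ε h1 h2 φ ψ) y v) x :=
    (((hC.contDiffAt (hO.mem_nhds hx)).fderiv_right (m := 1) (by norm_num)).differentiableAt
      (by norm_num)).clm_apply (differentiableAt_const v)
  refine fderiv_eq_of_line v hd ?_
  refine (utilD_line v (diff_of_C2 g1 hx.1).1 (diff_of_C2 g2 hx.1).1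
    (diff_of_C2 gφ hx.1).1 (diff_of_C2 gψ hx.1).1 (diff_of_C2 g1 hx.1).2 (diff_of_C2 g2 hx.1).2
    (diff_of_C2 gφ hx.1).2 (diff_of_C2 gψ hx.1).2 (hpos _ hx.1.le)).congr_of_eventuallyEq ?_
  have hc : ContinuousAt (fun s : ℝ => x + s • v) 0 := by fun_prop
  have : ∀ᶠ s : ℝ in 𝓝 0, x + s • v ∈ Omega n ε h1 h2 1 :=
    hc.eventually_mem (by simpa using hO.mem_nhds hx)
  filter_upwards [this] with s hs
  exact fderiv_util g1 g2 gφ gψ hpos hs v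

lemma ubar_mem {n : ℕ} {ε : ℝ} {h1 h2 : Ep n → ℝ} {x : Efull n} {r : ℝ}
    (hx : x ∈ Omega n ε h1 h2 r) :
    0 ≤ ubar n ε h1 h2 x ∧ ubar n ε h1 h2 x ≤ 1 := by
  obtain ⟨_, h, h'⟩ := hx
  have : 0 < ε + h1 x.1 - h2 x.1 := by linarith
  unfold ubar
  exact ⟨div_nonneg (by linarith) this.le, (div_le_one this).2 (by linarith)⟩

lemma abs_clm_apply_le {n : ℕ} {L : Ep n →L[ℝ] ℝ} {v : Ep n} {a : ℝ} (hL : ‖L‖ ≤ a)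
    (hv : ‖v‖ ≤ 1) : |L v| ≤ a := by
  have := L.le_opNorm v
  rw [Real.norm_eq_abs] at this
  nlinarith [norm_nonneg L, norm_nonneg v]

lemma abs_clm_apply_le2 {n : ℕ} {L : Ep n →L[ℝ] Ep n →L[ℝ] ℝ} {v : Ep n} {a : ℝ} (hL : ‖L‖ ≤ a)
    (hv : ‖v‖ ≤ 1) : |L v v| ≤ a := by
  have h1 : ‖L v‖ ≤ ‖L‖ * ‖v‖ := L.le_opNorm v
  have h2 : ‖L‖ * ‖v‖ ≤ ‖L‖ := mul_le_of_le_one_right (norm_nonneg L) hv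
  exact abs_clm_apply_le (h1.trans (h2.trans hL)) hv

/-- Purely scalar form of the bound on the second derivative of `ũ` in a horizontal direction.
Here `dl` is the gap, `X = |x'|` and `q = ū(x)`. -/
lemma scalar_second_bound {q a1 a2 b1 b2 p1 p2 s1 s2 f dl κ X M C₀ : ℝ}
    (hq0 : 0 ≤ q) (hq1 : q ≤ 1) (hdl : 0 < dl) (hκ : 0 ≤ κ) (hX : 0 ≤ X) (hM : 0 ≤ M)
    (hXd : X ^ 2 ≤ C₀ * dl)
    (ha1 : |a1| ≤ κ * X) (ha2 : |a2| ≤ κ * X) (hb1 : |b1| ≤ κ) (hb2 : |b2| ≤ κ)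
    (hp : |p1| + |p2| ≤ M) (hs : |s1| + |s2| ≤ M) :
    dl * |s1 * q + s2 * (1 - q) + 2 * (p1 - p2) * ((0 - a2 - q * (a1 - a2)) / dl)
      + f * ((-b2 - 2 * ((0 - a2 - q * (a1 - a2)) / dl) * (a1 - a2) - q * (b1 - b2)) / dl)|
    ≤ M * dl + 6 * κ * M * X + |f| * (3 * κ + 12 * κ ^ 2 * C₀) := by
  have hd : |a1 - a2| ≤ 2 * (κ * X) := (abs_sub _ _).trans (by linarith)
  have hκX : 0 ≤ κ * X := by positivity
  have hQ : |0 - a2 - q * (a1 - a2)| ≤ 3 * (κ * X) := by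
    have : 0 - a2 - q * (a1 - a2) = -(1 - q) * a2 - q * a1 := by ring
    rw [this]
    refine (abs_sub _ _).trans ?_
    rw [abs_mul, abs_mul, abs_neg, abs_of_nonneg hq0, abs_of_nonneg (by linarith : 0 ≤ 1 - q)]
    nlinarith [abs_nonneg a1, abs_nonneg a2]
  set Q := 0 - a2 - q * (a1 - a2) with hQdef
  have hQd : |Q / dl * (a1 - a2)| ≤ 6 * κ ^ 2 * C₀ := by
    rw [abs_mul, abs_div, abs_of_pos hdl, div_mul_eq_mul_div, div_le_iff₀ hdl]
    calc |Q| * |a1 - a2| ≤ 3 * (κ * X) * (2 * (κ * X)) :=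
          mul_le_mul hQ hd (abs_nonneg _) (by positivity)
      _ = 6 * κ ^ 2 * X ^ 2 := by ring
      _ ≤ 6 * κ ^ 2 * (C₀ * dl) := by gcongr
      _ = _ := by ring
  have hR : |-b2 - 2 * (Q / dl) * (a1 - a2) - q * (b1 - b2)| ≤ 3 * κ + 12 * κ ^ 2 * C₀ := by
    have e : -b2 - 2 * (Q / dl) * (a1 - a2) - q * (b1 - b2)
        = -2 * (Q / dl * (a1 - a2)) + (-(1 - q) * b2 - q * b1) := by ring
    rw [e]
    refine (abs_add_le _ _).trans ?_
    have e2 : |-(1 - q) * b2 - q * b1| ≤ κ := by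
      refine (abs_sub _ _).trans ?_
      rw [abs_mul, abs_mul, abs_neg, abs_of_nonneg hq0, abs_of_nonneg (by linarith : 0 ≤ 1 - q)]
      nlinarith [abs_nonneg b1, abs_nonneg b2]
    rw [abs_mul, abs_neg, abs_two]
    linarith
  set R := -b2 - 2 * (Q / dl) * (a1 - a2) - q * (b1 - b2) with hRdef
  have e3 : dl * |s1 * q + s2 * (1 - q) + 2 * (p1 - p2) * (Q / dl) + f * (R / dl)| =
      |dl * (s1 * q + s2 * (1 - q)) + 2 * (p1 - p2) * Q + f * R| := by
    rw [← abs_of_pos hdl, ← abs_mul, abs_of_pos hdl]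
    congr 1
    field_simp
  rw [e3]
  refine (abs_add_le _ _).trans (add_le_add ((abs_add_le _ _).trans (add_le_add ?_ ?_)) ?_)
  · rw [abs_mul, abs_of_pos hdl, mul_comm]
    gcongr
    refine (abs_add_le _ _).trans ?_
    rw [abs_mul, abs_mul, abs_of_nonneg hq0, abs_of_nonneg (by linarith : 0 ≤ 1 - q)]
    nlinarith [abs_nonneg s1, abs_nonneg s2]
  · rw [abs_mul, abs_mul, abs_two]
    have : |p1 - p2| ≤ M := (abs_sub _ _).trans hp
    calc 2 * |p1 - p2| * |Q| ≤ 2 * M * (3 * (κ * X)) := by gcongr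
      _ = _ := by ring
  · rw [abs_mul]; gcongr

lemma gap_pos
    {n : ℕ} {ε C₀ : ℝ} {h1 h2 : Ep n → ℝ} (hε : 0 < ε) (hC₀ : 1 ≤ C₀)
    (hδ : DeltaComp n ε C₀ h1 h2)
    {y : Ep n} (hy : ‖y‖ ≤ 1) : ε / C₀ ≤ ε + h1 y - h2 y ∧ 0 < ε + h1 y - h2 y := by
  have h := (hδ y hy).1
  have hC : 0 < C₀ := by linarith
  have : ε / C₀ ≤ (ε + ‖y‖ ^ 2) / C₀ := by gcongr; nlinarith [norm_nonneg y]
  have h2 : 0 < ε / C₀ := by positivity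
  exact ⟨this.trans h, h2.trans_le (this.trans h)⟩


lemma utilDD_bound
    {n : ℕ} {ε κ1 C₀ : ℝ} {h1 h2 φ ψ : Ep n → ℝ} (hε : 0 < ε) (hC₀ : 1 ≤ C₀)
    (g1 : ContDiffOn ℝ 2 h1 (closedBall 0 1)) (g2 : ContDiffOn ℝ 2 h2 (closedBall 0 1))
    (z1 : fderiv ℝ h1 0 = 0) (z2 : fderiv ℝ h2 0 = 0)
    (hκ : C2norm n h1 + C2norm n h2 ≤ κ1) (hδ : DeltaComp n ε C₀ h1 h2)
    (gφ : ContDiffOn ℝ 2 φ (closedBall 0 1)) (gψ : ContDiffOn ℝ 2 ψ (closedBall 0 1))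
    {x : Efull n} (hx : x ∈ Omega n ε h1 h2 1) (α : Fin n) :
    (ε + h1 x.1 - h2 x.1) * |utilDD ε h1 h2 φ ψ (dir n α) x| ≤
      (C2norm n φ + C2norm n ψ) * (ε + h1 x.1 - h2 x.1)
        + 6 * κ1 * (C2norm n φ + C2norm n ψ) * ‖x.1‖
        + |φ x.1 - ψ x.1| * (3 * κ1 + 12 * κ1 ^ 2 * C₀) := by
  have hdl := (gap_pos hε hC₀ hδ hx.1.le).2
  have n1 := C2norm_nonneg h1
  have n2 := C2norm_nonneg h2
  have n3 := C2norm_nonneg φ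
  have n4 := C2norm_nonneg ψ
  have hκ0 : 0 ≤ κ1 := by linarith
  rcases dir_cases α with ⟨hv, hv2⟩ | ⟨hv, hv2⟩
  · have hq := ubar_mem hx
    have b1 := C2norm_bounds g1 hx.1.le
    have b2 := C2norm_bounds g2 hx.1.le
    have b3 := C2norm_bounds gφ hx.1.le
    have b4 := C2norm_bounds gψ hx.1.le
    have hXd : ‖x.1‖ ^ 2 ≤ C₀ * (ε + h1 x.1 - h2 x.1) := by
      have := (hδ x.1 hx.1.le).1
      rw [div_le_iff₀ (by linarith)] at this
      linarith
    unfold utilDD ubarDD ubarD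
    rw [hv2]
    exact scalar_second_bound hq.1 hq.2 hdl hκ0 (norm_nonneg _) (by linarith) hXd
      (abs_clm_apply_le (norm_fderiv_le_mul_norm g1 z1 (by linarith) hx.1) hv.le)
      (abs_clm_apply_le (norm_fderiv_le_mul_norm g2 z2 (by linarith) hx.1) hv.le)
      (abs_clm_apply_le2 (b1.2.2.trans (by linarith)) hv.le)
      (abs_clm_apply_le2 (b2.2.2.trans (by linarith)) hv.le)
      (add_le_add (abs_clm_apply_le b3.2.1 hv.le) (abs_clm_apply_le b4.2.1 hv.le))
      (add_le_add (abs_clm_apply_le2 b3.2.2 hv.le) (abs_clm_apply_le2 b4.2.2 hv.le))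
  · have : utilDD ε h1 h2 φ ψ (dir n α) x = 0 := by
      simp [utilDD, ubarDD, hv]
    rw [this]
    have : 0 ≤ C₀ := by linarith
    simp only [abs_zero, mul_zero]
    positivity

/-- The main pointwise bound on the source: the terms of order `δ⁻²|∇δ|²` are absorbed by
`|x'|² ≤ C₀ δ`, and the flatness of `h1`, `h2` at the origin gives the factor `|x'|`. -/
lemma lapl_util_bound
    {n : ℕ} {ε κ1 C₀ : ℝ} {h1 h2 φ ψ : Ep n → ℝ} (hε : 0 < ε) (hC₀ : 1 ≤ C₀)
    (g1 : ContDiffOn ℝ 2 h1 (closedBall 0 1)) (g2 : ContDiffOn ℝ 2 h2 (closedBall 0 1))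
    (z1 : fderiv ℝ h1 0 = 0) (z2 : fderiv ℝ h2 0 = 0)
    (hκ : C2norm n h1 + C2norm n h2 ≤ κ1) (hδ : DeltaComp n ε C₀ h1 h2)
    (gφ : ContDiffOn ℝ 2 φ (closedBall 0 1)) (gψ : ContDiffOn ℝ 2 ψ (closedBall 0 1))
    {x : Efull n} (hx : x ∈ Omega n ε h1 h2 1) :
    (ε + h1 x.1 - h2 x.1) * |lapl n (util n ε h1 h2 φ ψ) x| ≤
      n * ((C2norm n φ + C2norm n ψ) * (ε + h1 x.1 - h2 x.1)
        + 6 * κ1 * (C2norm n φ + C2norm n ψ) * ‖x.1‖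
        + |φ x.1 - ψ x.1| * (3 * κ1 + 12 * κ1 ^ 2 * C₀)) := by
  have hdl := (gap_pos hε hC₀ hδ hx.1.le).2
  have e : lapl n (util n ε h1 h2 φ ψ) x = ∑ α, utilDD ε h1 h2 φ ψ (dir n α) x :=
    Finset.sum_congr rfl fun α _ => fderiv_fderiv_util g1 g2 gφ gψ
      (fun y hy => (gap_pos hε hC₀ hδ hy).2) hx (dir n α)
  rw [e]
  calc _ ≤ (ε + h1 x.1 - h2 x.1) * ∑ α, |utilDD ε h1 h2 φ ψ (dir n α) x| := by
        gcongr; exact Finset.abs_sum_le_sum_abs _ _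
    _ = ∑ α, (ε + h1 x.1 - h2 x.1) * |utilDD ε h1 h2 φ ψ (dir n α) x| := Finset.mul_sum _ _ _
    _ ≤ ∑ _α : Fin n, _ := Finset.sum_le_sum fun α _ =>
        utilDD_bound hε hC₀ g1 g2 z1 z2 hκ hδ gφ gψ hx α
    _ = _ := by simp; ring

/-- Boundedness of `∇ũ` on `Ω₁`, with a constant that depends on `ε`. -/
lemma utilD_bound
    {n : ℕ} {ε κ1 C₀ : ℝ} {h1 h2 φ ψ : Ep n → ℝ} (hε : 0 < ε) (hC₀ : 1 ≤ C₀)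
    (g1 : ContDiffOn ℝ 2 h1 (closedBall 0 1)) (g2 : ContDiffOn ℝ 2 h2 (closedBall 0 1))
    (z1 : fderiv ℝ h1 0 = 0) (z2 : fderiv ℝ h2 0 = 0)
    (hκ : C2norm n h1 + C2norm n h2 ≤ κ1) (hδ : DeltaComp n ε C₀ h1 h2)
    (gφ : ContDiffOn ℝ 2 φ (closedBall 0 1)) (gψ : ContDiffOn ℝ 2 ψ (closedBall 0 1))
    : ∃ K, ∀ x ∈ Omega n ε h1 h2 1, ∀ α,
    |fderiv ℝ (util n ε h1 h2 φ ψ) x (dir n α)| ≤ K := by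
  have n1 := C2norm_nonneg h1
  have n2 := C2norm_nonneg h2
  have n3 := C2norm_nonneg φ
  have n4 := C2norm_nonneg ψ
  have hκ0 : 0 ≤ κ1 := by linarith
  refine ⟨C2norm n φ + C2norm n ψ + (C2norm n φ + C2norm n ψ) * ((1 + 3 * κ1) / (ε / C₀)),
    fun x hx α => ?_⟩
  rw [fderiv_util g1 g2 gφ gψ (fun y hy => (gap_pos hε hC₀ hδ hy).2) hx]
  have hdl := gap_pos hε hC₀ hδ hx.1.le
  have hv := norm_dir_le α
  have hq := ubar_mem hx
  have b1 := C2norm_bounds g1 hx.1.le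
  have b2 := C2norm_bounds g2 hx.1.le
  have b3 := C2norm_bounds gφ hx.1.le
  have b4 := C2norm_bounds gψ hx.1.le
  have hp : 0 < ε / C₀ := div_pos hε (by linarith)
  have c1 := abs_clm_apply_le (b1.2.1.trans (by linarith : _ ≤ κ1)) hv.1
  have c2 := abs_clm_apply_le (b2.2.1.trans (by linarith : _ ≤ κ1)) hv.1
  have c3 := abs_clm_apply_le b3.2.1 hv.1
  have c4 := abs_clm_apply_le b4.2.1 hv.1
  have hqD : |ubarD ε h1 h2 (dir n α) x| ≤ (1 + 3 * κ1) / (ε / C₀) := by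
    unfold ubarD
    rw [abs_div, abs_of_pos hdl.2]
    refine div_le_div₀ (by positivity) ?_ hp hdl.1
    refine (abs_sub _ _).trans ?_
    have t1 := abs_sub ((dir n α).2) (fderiv ℝ h2 x.1 (dir n α).1)
    have t2 : |ubar n ε h1 h2 x * (fderiv ℝ h1 x.1 (dir n α).1 - fderiv ℝ h2 x.1 (dir n α).1)|
        ≤ 1 * (κ1 + κ1) := by
      rw [abs_mul, abs_of_nonneg hq.1]
      exact mul_le_mul hq.2 ((abs_sub _ _).trans (add_le_add c1 c2)) (abs_nonneg _) zero_le_one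
    linarith [hv.2]
  unfold utilD
  refine (abs_add_le _ _).trans (add_le_add ((abs_add_le _ _).trans (add_le_add ?_ ?_)) ?_)
  · rw [abs_mul, abs_of_nonneg hq.1]
    exact (mul_le_of_le_one_right (abs_nonneg _) hq.2).trans c3
  · rw [abs_mul, abs_of_nonneg (by linarith : 0 ≤ 1 - ubar n ε h1 h2 x)]
    exact (mul_le_of_le_one_right (abs_nonneg _) (by linarith)).trans c4
  · rw [abs_mul]
    exact mul_le_mul ((abs_sub _ _).trans (add_le_add b3.1 b4.1)) hqD (abs_nonneg _)
      (by linarith)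

/-! ### The weighted energy inequality -/

lemma sum_dir_snd {n : ℕ} (hn : 2 ≤ n) : ∑ α, (dir n α).2 = 1 := by
  rw [sum_dir hn (fun v => v.2)]
  simp [tang, vert]

/-- Pointwise coercivity, one direction at a time: `W` and `W2` stand for `∂_α w` and `∂_α² w`,
`e` for `∂_α η`, and `τ` is the vertical component of the direction (`0` or `1`). -/
lemma scalar_energy {η e w W W2 τ b q : ℝ} (hτ : τ = 0 ∨ (τ = 1 ∧ e = 0)) (hb : 4 * b ^ 2 ≤ q) :
    (1/4) * (η ^ 2 * W ^ 2) - 4 * (w ^ 2 * e ^ 2) + η ^ 2 * (w * W2) + τ * ((1/2) * (η ^ 2 * (w ^ 2 * q)))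
      ≤ 2 * η * e * (w * (W + τ * (w * b))) + η ^ 2 * (W * (W + τ * (w * b))) +
        η ^ 2 * (w * (W2 + τ * (W * b + w * q))) := by
  rcases hτ with rfl | ⟨rfl, rfl⟩
  · nlinarith [sq_nonneg (η * W + 2 * w * e), sq_nonneg (η * W + 4 * w * e), sq_nonneg (η * W)]
  · have h1 : 0 ≤ η ^ 2 * (w ^ 2 * (q - 4 * b ^ 2)) := by
      have : 0 ≤ q - 4 * b ^ 2 := by linarith
      positivity
    have h2 : 0 ≤ η ^ 2 * (W + 2 * (w * b)) ^ 2 := by positivity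
    have h3 : 0 ≤ η ^ 2 * W ^ 2 := by positivity
    nlinarith

section
variable {n : ℕ} {ε C₀ : ℝ} {h1 h2 : Ep n → ℝ}

/-- The vertical profile `b = (x_n - (h₁ + h₂)/2)/δ²`: its vertical derivative is `1/δ²` while
`|b| ≤ 1/(2δ)`, so it encodes the one-dimensional Hardy-Poincaré inequality across the gap. -/
def profile (ε : ℝ) (h1 h2 : Ep n → ℝ) (x : Efull n) : ℝ :=
  (x.2 - (h1 x.1 + h2 x.1) / 2) / (ε + h1 x.1 - h2 x.1) ^ 2

lemma profile_contDiffOn (g1 : ContDiffOn ℝ 2 h1 (closedBall 0 1))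
    (g2 : ContDiffOn ℝ 2 h2 (closedBall 0 1))
    (hpos : ∀ y, ‖y‖ ≤ 1 → 0 < ε + h1 y - h2 y) :
    ContDiffOn ℝ 2 (profile ε h1 h2) (Omega n ε h1 h2 1) := by
  have a1 := contDiffOn_comp_fst g1 (S := Omega n ε h1 h2 1) fun x hx => hx.1.le
  have a2 := contDiffOn_comp_fst g2 (S := Omega n ε h1 h2 1) fun x hx => hx.1.le
  unfold profile
  refine ContDiffOn.div ?_ ?_ ?_
  · exact contDiff_snd.contDiffOn.sub ((a1.add a2).div_const 2)
  · exact ((contDiffOn_const.add a1).sub a2).pow 2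
  · intro x hx
    exact pow_ne_zero _ (hpos x.1 hx.1.le).ne'

lemma profile_bound {x : Efull n} (hx : x ∈ Omega n ε h1 h2 1) (hp : 0 < ε + h1 x.1 - h2 x.1) :
    4 * profile ε h1 h2 x ^ 2 ≤ 1 / (ε + h1 x.1 - h2 x.1) ^ 2 := by
  obtain ⟨_, hl, hu⟩ := hx
  unfold profile
  rw [div_pow, ← mul_div_assoc, div_le_div_iff₀ (by positivity) (by positivity)]
  have : 4 * (x.2 - (h1 x.1 + h2 x.1) / 2) ^ 2 ≤ (ε + h1 x.1 - h2 x.1) ^ 2 := by nlinarith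
  calc _ ≤ (ε + h1 x.1 - h2 x.1) ^ 2 * (ε + h1 x.1 - h2 x.1) ^ 2 := by gcongr
    _ = _ := by ring

lemma profile_vert {x : Efull n} (d : DifferentiableAt ℝ (profile ε h1 h2) x) {v : Efull n}
    (hv : v.1 = 0 ∧ v.2 = 1) :
    fderiv ℝ (profile ε h1 h2) x v = 1 / (ε + h1 x.1 - h2 x.1) ^ 2 := by
  refine fderiv_eq_of_line v d ?_
  have e : (fun t : ℝ => profile ε h1 h2 (x + t • v)) = fun t : ℝ =>
      (x.2 + t - (h1 x.1 + h2 x.1) / 2) / (ε + h1 x.1 - h2 x.1) ^ 2 := by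
    funext t; simp [profile, hv.1, hv.2]
  rw [e]
  exact (((hasDerivAt_id (0:ℝ)).const_add x.2).sub_const _).div_const _

lemma memLp_bdd_mul {μ : Measure (Efull n)} {Ω : Set (Efull n)} (hΩ : MeasurableSet Ω)
    {f g : Efull n → ℝ} (hf : ContinuousOn f Ω) {B : ℝ} (hB : ∀ x ∈ Ω, |f x| ≤ B)
    (hg : MemLp g 2 (μ.restrict Ω)) : MemLp (fun x => f x * g x) 2 (μ.restrict Ω) := by
  refine MemLp.of_le_mul (c := B) hg ((hf.aestronglyMeasurable hΩ).mul hg.1) ?_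
  filter_upwards [ae_restrict_mem hΩ] with x hx
  rw [norm_mul]
  exact mul_le_mul_of_nonneg_right (hB x hx) (norm_nonneg _)

/-- Weighted energy inequality. Testing the equation with `η² w` and adding the vertical flux
`w² b` of `profile` absorbs all terms in which a derivative of the weight costs at most `η/δ`. -/
lemma energy_ineq (hn : 2 ≤ n) (hε : 0 < ε) (hC₀ : 1 ≤ C₀)
    (g1 : ContDiffOn ℝ 2 h1 (closedBall 0 1)) (g2 : ContDiffOn ℝ 2 h2 (closedBall 0 1))
    (hδ : DeltaComp n ε C₀ h1 h2)
    {w : Efull n → ℝ} (hw : ContDiffOn ℝ 2 w (Omega n ε h1 h2 1))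
    (m0 : MemLp w 2 (volume.restrict (Omega n ε h1 h2 1)))
    (m1 : ∀ α, MemLp (fun x => fderiv ℝ w x (dir n α)) 2 (volume.restrict (Omega n ε h1 h2 1)))
    (m2 : MemLp (lapl n w) 2 (volume.restrict (Omega n ε h1 h2 1)))
    {η : Ep n → ℝ} (hη : ContDiff ℝ 1 η) {B E : ℝ} (hB : ∀ y, |η y| ≤ B)
    (hB' : ∀ y, ‖fderiv ℝ η y‖ ≤ B)
    (hK : ∀ t > 0, ∃ K, IsCompact K ∧ K ⊆ Omega n ε h1 h2 1 ∧
      ∀ x ∈ Omega n ε h1 h2 1, η x.1 ≠ 0 → t ≤ |w x| → x ∈ K)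
    (hE : ∀ y, ‖y‖ < 1 →
      4 * n * ‖fderiv ℝ η y‖ ^ 2 ≤ (1/4) * (η y / (ε + h1 y - h2 y)) ^ 2 + E) :
    IntegrableOn (fun x => η x.1 ^ 2 * ∑ α, (fderiv ℝ w x (dir n α)) ^ 2) (Omega n ε h1 h2 1) ∧
    IntegrableOn (fun x => η x.1 ^ 2 * ((ε + h1 x.1 - h2 x.1) * lapl n w x) ^ 2)
      (Omega n ε h1 h2 1) ∧
    ∫ x in Omega n ε h1 h2 1, η x.1 ^ 2 * ∑ α, (fderiv ℝ w x (dir n α)) ^ 2 ≤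
      4 * E * (∫ x in Omega n ε h1 h2 1, ‖w x‖ ^ 2) +
      8 * ∫ x in Omega n ε h1 h2 1, η x.1 ^ 2 * ((ε + h1 x.1 - h2 x.1) * lapl n w x) ^ 2 := by
  set Ω := Omega n ε h1 h2 1 with hΩdef
  have hΩ : IsOpen Ω := Omega_isOpen g1.continuousOn g2.continuousOn le_rfl
  have hpos : ∀ y : Ep n, ‖y‖ ≤ 1 → 0 < ε + h1 y - h2 y := fun y hy => (gap_pos hε hC₀ hδ hy).2
  have hb := profile_contDiffOn g1 g2 hpos
  set b := profile ε h1 h2 with hbdef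
  have hdw : ∀ v, ContDiffOn ℝ 1 (fun x => fderiv ℝ w x v) Ω := fun v =>
    (hw.fderiv_of_isOpen hΩ (by norm_num)).clm_apply contDiffOn_const
  have hb1 : ContDiffOn ℝ 1 b Ω := hb.of_le (by norm_num)
  have hw1 : ContDiffOn ℝ 1 w Ω := hw.of_le (by norm_num)
  have cg : ContinuousOn (fun x : Efull n => ε + h1 x.1 - h2 x.1) Ω :=
    (continuousOn_const.add (contDiffOn_comp_fst g1 fun x hx => hx.1.le).continuousOn).sub
      (contDiffOn_comp_fst g2 fun x hx => hx.1.le).continuousOn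
  have cη : ContinuousOn (fun x : Efull n => η x.1) Ω :=
    (hη.continuous.comp continuous_fst).continuousOn
  -- bounds for the coefficients, depending on `ε`
  have gb : ∀ x ∈ Ω, |ε + h1 x.1 - h2 x.1| ≤ C₀ * (ε + 1) := by
    intro x hx
    rw [abs_of_pos (hpos _ hx.1.le)]
    refine (hδ x.1 hx.1.le).2.trans ?_
    have : ‖x.1‖ ^ 2 ≤ 1 := pow_le_one₀ (norm_nonneg _) hx.1.le
    gcongr
  have gi : ∀ x ∈ Ω, |1 / (ε + h1 x.1 - h2 x.1) ^ 2| ≤ (C₀ / ε) ^ 2 := by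
    intro x hx
    have := (gap_pos hε hC₀ hδ hx.1.le).1
    have hC0' : 0 < C₀ := by linarith
    rw [abs_of_nonneg (by positivity), one_div, ← inv_pow, ← inv_div]
    have := hpos _ hx.1.le
    gcongr
  have cgi : ContinuousOn (fun x : Efull n => 1 / (ε + h1 x.1 - h2 x.1) ^ 2) Ω :=
    continuousOn_const.div (cg.pow 2) fun x hx => pow_ne_zero _ (hpos _ hx.1.le).ne'
  have bb : ∀ x ∈ Ω, |b x| ≤ C₀ / ε := by
    intro x hx
    have h1' := profile_bound hx (hpos _ hx.1.le)
    have h2' := gi x hx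
    have : 0 ≤ C₀ / ε := by positivity
    refine abs_le_of_sq_le_sq ?_ this
    have := le_abs_self (1 / (ε + h1 x.1 - h2 x.1) ^ 2)
    nlinarith [sq_nonneg (b x)]
  have mwb : MemLp (fun x => b x * w x) 2 (volume.restrict Ω) :=
    memLp_bdd_mul hΩ.measurableSet hb.continuousOn bb m0
  have mp : ∀ α, MemLp (fun x => fderiv ℝ w x (dir n α) + (dir n α).2 * (w x * b x)) 2
      (volume.restrict Ω) := fun α => by
    have := (m1 α).add (mwb.const_mul (dir n α).2)
    refine this.ae_eq (Eventually.of_forall fun x => ?_)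
    simp [mul_comm]
  have hfd : ∀ x ∈ Ω, ∀ α, fderiv ℝ (fun x => fderiv ℝ w x (dir n α) + (dir n α).2 * (w x * b x)) x
      (dir n α) = fderiv ℝ (fun y => fderiv ℝ w y (dir n α)) x (dir n α) + (dir n α).2 *
        (fderiv ℝ w x (dir n α) * b x + w x * (1 / (ε + h1 x.1 - h2 x.1) ^ 2)) := by
    intro x hx α
    have hx' := hΩ.mem_nhds hx
    have e1 := ((hdw (dir n α)).contDiffAt hx').differentiableAt (by norm_num)
    have e2 := (hb1.contDiffAt hx').differentiableAt (by norm_num)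
    have e3 := (hw1.contDiffAt hx').differentiableAt (by norm_num)
    have e4 : HasFDerivAt (fun x => fderiv ℝ w x (dir n α) + (dir n α).2 * (w x * b x)) _ x :=
      e1.hasFDerivAt.add ((e3.hasFDerivAt.mul e2.hasFDerivAt).const_mul (dir n α).2)
    rw [e4.fderiv]
    rcases dir_cases α with ⟨_, h⟩ | h
    · simp [h]
    · have := profile_vert e2 h
      simp only [← hbdef] at this
      simp [this, h.2]; ring
  have mdp : MemLp (fun x => ∑ α, fderiv ℝ (fun x => fderiv ℝ w x (dir n α) +
      (dir n α).2 * (w x * b x)) x (dir n α)) 2 (volume.restrict Ω) := by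
    have h1' : MemLp (fun x => ∑ α, ((dir n α).2 * (b x * fderiv ℝ w x (dir n α)) +
        (dir n α).2 * (1 / (ε + h1 x.1 - h2 x.1) ^ 2 * w x))) 2 (volume.restrict Ω) := by
      refine memLp_finsetSum _ fun α _ => ?_
      exact ((memLp_bdd_mul hΩ.measurableSet hb.continuousOn bb (m1 α)).const_mul _).add
        ((memLp_bdd_mul hΩ.measurableSet cgi gi m0).const_mul _)
    refine (m2.add h1').ae_eq ?_
    filter_upwards [ae_restrict_mem hΩ.measurableSet] with x hx
    simp only [Pi.add_apply, lapl, ← Finset.sum_add_distrib]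
    refine Finset.sum_congr rfl fun α _ => ?_
    rw [hfd x hx α]; ring
  have fη : ∀ x v, fderiv ℝ (fun x : Efull n => η x.1) x v = fderiv ℝ η x.1 v.1 := by
    intro x v
    have := ((hη.differentiable (by norm_num) x.1).hasFDerivAt.comp x hasFDerivAt_fst).fderiv
    simp only [Function.comp_def] at this
    rw [this]; simp
  have feb : ∀ x α, |fderiv ℝ (fun x : Efull n => η x.1) x (dir n α)| ≤ B := by
    intro x α
    rw [fη]
    exact abs_clm_apply_le (hB' _) (norm_dir_le α).1
  have I1 : ∀ α, IntegrableOn (fun x => w x * (fderiv ℝ w x (dir n α) +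
      (dir n α).2 * (w x * b x))) Ω := fun α => m0.integrable_mul (mp α)
  have I2 : ∀ α, IntegrableOn (fun x => fderiv ℝ w x (dir n α) * (fderiv ℝ w x (dir n α) +
      (dir n α).2 * (w x * b x))) Ω := fun α => (m1 α).integrable_mul (mp α)
  have I3 := m0.integrable_mul mdp
  have : (volume : Measure (Efull n)).IsAddHaarMeasure := by
    rw [Measure.volume_eq_prod]; infer_instance
  have key := key_identity volume (dir n) hΩ hw1 (η := fun x => η x.1) (hη.comp contDiff_fst)
    (p := fun α x => fderiv ℝ w x (dir n α) + (dir n α).2 * (w x * b x))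
    (fun α => (hdw _).add (contDiffOn_const.mul (hw1.mul hb1))) hK (B := B) (fun x => hB x.1)
    feb I1 I2 I3
  have mη : MemLp (fun x => ∑ α, ‖fderiv ℝ w x (dir n α)‖) 2 (volume.restrict Ω) :=
    memLp_finsetSum _ fun α _ => (m1 α).norm
  have cη2 : ∀ x ∈ Ω, |η x.1 ^ 2| ≤ B ^ 2 := fun x _ => by
    rw [abs_pow]; exact pow_le_pow_left₀ (abs_nonneg _) (hB _) _
  have bddmul : ∀ {f g : Efull n → ℝ}, ContinuousOn f Ω → ∀ {c : ℝ}, (∀ x ∈ Ω, |f x| ≤ c) →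
      IntegrableOn g Ω → IntegrableOn (fun x => f x * g x) Ω := by
    intro f g hf c hc hg
    refine Integrable.bdd_mul (c := c) hg (hf.aestronglyMeasurable hΩ.measurableSet) ?_
    filter_upwards [ae_restrict_mem hΩ.measurableSet] with x hx using hc x hx
  have J1 : IntegrableOn (fun x => η x.1 ^ 2 * ∑ α, (fderiv ℝ w x (dir n α)) ^ 2) Ω :=
    bddmul (cη.pow 2) cη2 (integrable_finsetSum _ fun α _ => (m1 α).integrable_sq)
  have J2 : IntegrableOn (fun x => η x.1 ^ 2 * ((ε + h1 x.1 - h2 x.1) * lapl n w x) ^ 2) Ω :=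
    bddmul (cη.pow 2) cη2 (memLp_bdd_mul hΩ.measurableSet cg gb m2).integrable_sq
  have J3 : IntegrableOn (fun x => ‖w x‖ ^ 2) Ω := m0.norm.integrable_sq
  refine ⟨J1, J2, ?_⟩
  have cfe : ∀ α, ContinuousOn (fun x => fderiv ℝ (fun x : Efull n => η x.1) x (dir n α)) Ω := by
    intro α
    have : ContDiff ℝ 1 (fun x : Efull n => η x.1) := hη.comp contDiff_fst
    exact ((this.continuous_fderiv (by norm_num)).clm_apply continuous_const).continuousOn
  have J4 : IntegrableOn (fun x => (∑ α, (2 * η x.1 * fderiv ℝ (fun x : Efull n => η x.1) x (dir n α) *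
      (w x * (fderiv ℝ w x (dir n α) + (dir n α).2 * (w x * b x))) +
      η x.1 ^ 2 * (fderiv ℝ w x (dir n α) *
        (fderiv ℝ w x (dir n α) + (dir n α).2 * (w x * b x))))) +
      η x.1 ^ 2 * (w x * ∑ α, fderiv ℝ (fun x => fderiv ℝ w x (dir n α) +
        (dir n α).2 * (w x * b x)) x (dir n α))) Ω := by
    refine (integrable_finsetSum _ fun α _ => Integrable.add ?_ ?_).add ?_
    · refine bddmul (((continuousOn_const.mul cη).mul (cfe α))) (c := 2 * B * B) ?_ (I1 α)
      intro x _
      rw [abs_mul, abs_mul, abs_two]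
      have := (abs_nonneg _).trans (hB x.1)
      gcongr
      · exact hB _
      · exact feb x α
    · exact bddmul (cη.pow 2) cη2 (I2 α)
    · exact bddmul (cη.pow 2) cη2 I3
  -- the pointwise coercivity, integrated: the integrand on the left is below that of `key`
  have low : ∫ x in Ω, ((1/4) * (η x.1 ^ 2 * ∑ α, (fderiv ℝ w x (dir n α)) ^ 2) -
      E * ‖w x‖ ^ 2 - 2 * (η x.1 ^ 2 * ((ε + h1 x.1 - h2 x.1) * lapl n w x) ^ 2)) ≤ 0 := by
    rw [← key]
    refine setIntegral_mono_on (((J1.const_mul _).sub (J3.const_mul _)).sub (J2.const_mul _)) J4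
      hΩ.measurableSet fun x hx => ?_
    have hp := hpos x.1 hx.1.le
    set g := ε + h1 x.1 - h2 x.1 with hg
    have hq := profile_bound hx hp
    have step : ∑ α, ((1/4) * (η x.1 ^ 2 * (fderiv ℝ w x (dir n α)) ^ 2) -
        4 * (w x ^ 2 * (fderiv ℝ η x.1 (dir n α).1) ^ 2) +
        η x.1 ^ 2 * (w x * fderiv ℝ (fun y => fderiv ℝ w y (dir n α)) x (dir n α)) +
        (dir n α).2 * ((1/2) * (η x.1 ^ 2 * (w x ^ 2 * (1 / g ^ 2))))) ≤
        (∑ α, (2 * η x.1 * fderiv ℝ (fun x : Efull n => η x.1) x (dir n α) *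
      (w x * (fderiv ℝ w x (dir n α) + (dir n α).2 * (w x * b x))) +
      η x.1 ^ 2 * (fderiv ℝ w x (dir n α) *
        (fderiv ℝ w x (dir n α) + (dir n α).2 * (w x * b x))))) +
      η x.1 ^ 2 * (w x * ∑ α, fderiv ℝ (fun x => fderiv ℝ w x (dir n α) +
        (dir n α).2 * (w x * b x)) x (dir n α)) := by
      rw [Finset.mul_sum, Finset.mul_sum, ← Finset.sum_add_distrib]
      refine Finset.sum_le_sum fun α _ => ?_
      rw [hfd x hx α, fη]
      refine scalar_energy ?_ hq
      rcases dir_cases α with ⟨_, h⟩ | h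
      · exact Or.inl h
      · exact Or.inr ⟨h.2, by simp [h.1]⟩
    refine le_trans ?_ step
    rw [Finset.sum_add_distrib, Finset.sum_add_distrib, Finset.sum_sub_distrib, ← Finset.mul_sum,
      ← Finset.mul_sum, ← Finset.mul_sum, ← Finset.mul_sum, ← Finset.mul_sum, ← Finset.mul_sum,
      ← Finset.sum_mul, sum_dir_snd hn]
    have hl : ∑ α, fderiv ℝ (fun y => fderiv ℝ w y (dir n α)) x (dir n α) = lapl n w x := rfl
    rw [hl]
    have s1 : ∑ α, (fderiv ℝ η x.1 (dir n α).1) ^ 2 ≤ n * ‖fderiv ℝ η x.1‖ ^ 2 := by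
      calc _ ≤ ∑ _α : Fin n, ‖fderiv ℝ η x.1‖ ^ 2 := Finset.sum_le_sum fun α _ => by
            rw [← sq_abs]
            exact pow_le_pow_left₀ (abs_nonneg _) (abs_clm_apply_le le_rfl (norm_dir_le α).1) _
        _ = _ := by simp
    have s2 := hE x.1 hx.1
    rw [← hg] at s2
    have s3 : w x ^ 2 * (4 * ∑ α, (fderiv ℝ η x.1 (dir n α).1) ^ 2) ≤
        w x ^ 2 * ((1/4) * (η x.1 / g) ^ 2 + E) := by
      gcongr; linarith
    have s4 : -(η x.1 ^ 2 * (w x * lapl n w x)) ≤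
        (1/8) * (w x ^ 2 * (η x.1 / g) ^ 2) + 2 * (η x.1 ^ 2 * (g * lapl n w x) ^ 2) := by
      have e : η x.1 ^ 2 * (w x * lapl n w x) =
          (w x * (η x.1 / g)) * (η x.1 * (g * lapl n w x)) := by
        field_simp
      rw [e]
      nlinarith [sq_nonneg (w x * (η x.1 / g) + 4 * (η x.1 * (g * lapl n w x)))]
    have s5 : η x.1 ^ 2 * (w x ^ 2 * (1 / g ^ 2)) = w x ^ 2 * (η x.1 / g) ^ 2 := by
      rw [div_pow]; ring
    have s6 : 0 ≤ w x ^ 2 * (η x.1 / g) ^ 2 := by positivity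
    rw [s5, Real.norm_eq_abs, sq_abs]
    linarith
  have K3 := (J1.const_mul (1/4)).sub (J3.const_mul E)
  have K1 := integral_sub K3 (J2.const_mul 2)
  have K2 := integral_sub (J1.const_mul (1/4)) (J3.const_mul E)
  simp only [Pi.sub_apply] at K1
  rw [K1, K2, integral_const_mul, integral_const_mul, integral_const_mul] at low
  linarith

end

/-! ### Regularity and boundary behaviour of the difference -/

section
variable {n : ℕ} {ε κ1 C₀ : ℝ} {h1 h2 φ ψ : Ep n → ℝ}

lemma Omega_volume_lt_top (g1 : ContDiffOn ℝ 2 h1 (closedBall 0 1))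
    (g2 : ContDiffOn ℝ 2 h2 (closedBall 0 1)) :
    volume (Omega n ε h1 h2 1) < ⊤ := by
  refine (Bornology.IsBounded.subset (isBounded_closedBall (x := (0 : Efull n))
    (r := 1 + |ε| + C2norm n h1 + C2norm n h2)) ?_).measure_lt_top
  intro x hx
  have n1 := C2norm_nonneg h1
  have n2 := C2norm_nonneg h2
  have b1 := abs_le.1 (C2norm_bounds g1 hx.1.le).1
  have b2 := abs_le.1 (C2norm_bounds g2 hx.1.le).1
  obtain ⟨h, hl, hu⟩ := hx
  have a1 := le_abs_self ε
  have a2 := neg_abs_le ε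
  rw [mem_closedBall_zero_iff, Prod.norm_def, max_le_iff, Real.norm_eq_abs, abs_le]
  refine ⟨?_, ?_, ?_⟩ <;> linarith

/-- The closed middle part of the narrow region is compact. -/
lemma isCompact_closedRegion (g1 : ContDiffOn ℝ 2 h1 (closedBall 0 1))
    (g2 : ContDiffOn ℝ 2 h2 (closedBall 0 1)) (hpos : ∀ y, ‖y‖ ≤ 1 → 0 < ε + h1 y - h2 y) :
    IsCompact {x : Efull n | ‖x.1‖ ≤ 3/4 ∧ -ε/2 + h2 x.1 ≤ x.2 ∧ x.2 ≤ ε/2 + h1 x.1} := by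
  have hsub : closedBall (0 : Ep n) (3/4) ⊆ closedBall 0 1 := closedBall_subset_closedBall (by norm_num)
  have hc : IsCompact ((closedBall (0 : Ep n) (3/4)) ×ˢ Set.Icc (0:ℝ) 1) :=
    (isCompact_closedBall _ _).prod isCompact_Icc
  have c1 : ContinuousOn (fun p : Efull n => h1 p.1) (closedBall (0 : Ep n) (3/4) ×ˢ Set.Icc (0:ℝ) 1) :=
    (g1.continuousOn.mono hsub).comp continuousOn_fst fun p hp => hp.1
  have c2 : ContinuousOn (fun p : Efull n => h2 p.1) (closedBall (0 : Ep n) (3/4) ×ˢ Set.Icc (0:ℝ) 1) :=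
    (g2.continuousOn.mono hsub).comp continuousOn_fst fun p hp => hp.1
  have hf : ContinuousOn (fun p : Efull n => ((p.1, (1 - p.2) * (-ε/2 + h2 p.1) +
      p.2 * (ε/2 + h1 p.1)) : Efull n)) (closedBall (0 : Ep n) (3/4) ×ˢ Set.Icc (0:ℝ) 1) := by
    refine continuousOn_fst.prodMk ?_
    exact ((continuousOn_const.sub continuousOn_snd).mul (continuousOn_const.add c2)).add
      (continuousOn_snd.mul (continuousOn_const.add c1))
  convert hc.image_of_continuousOn hf using 1
  ext x
  simp only [Set.mem_ofPred_eq, Set.mem_image, Set.mem_prod, mem_closedBall_zero_iff]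
  constructor
  · rintro ⟨ha, hl, hu⟩
    have : x.2 ∈ segment ℝ (-ε/2 + h2 x.1) (ε/2 + h1 x.1) := by
      rw [segment_eq_Icc (hl.trans hu)]; exact ⟨hl, hu⟩
    obtain ⟨a, b, ha', hb', hab, e⟩ := this
    refine ⟨(x.1, b), ⟨ha, hb', by linarith⟩, ?_⟩
    refine Prod.ext rfl ?_
    simp only [smul_eq_mul] at e
    simp only
    rw [← e, ← hab]; ring
  · rintro ⟨p, ⟨ha, h0, h1'⟩, rfl⟩
    have hp := hpos p.1 (ha.trans (by norm_num))
    refine ⟨ha, ?_, ?_⟩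
    · simp only; nlinarith
    · simp only; nlinarith

lemma util_top {y : Ep n} (hp : 0 < ε + h1 y - h2 y) :
    util n ε h1 h2 φ ψ (y, ε/2 + h1 y) = φ y := by
  have : ubar n ε h1 h2 (y, ε/2 + h1 y) = 1 := by
    simp only [ubar]; rw [div_eq_one_iff_eq hp.ne']; ring
  simp [util, this]

lemma util_bottom {y : Ep n} :
    util n ε h1 h2 φ ψ (y, -ε/2 + h2 y) = ψ y := by
  have : ubar n ε h1 h2 (y, -ε/2 + h2 y) = 0 := by
    simp only [ubar]; rw [div_eq_zero_iff]; left; ring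
  simp [util, this]

/-- Over `|x'| ≤ 3/4`, each superlevel set `{|u - ũ| ≥ t}` with `t > 0` lies in a compact subset of
`Ω₁`, because it vanishes on the top and bottom boundaries. -/
lemma compact_superlevel (g1 : ContDiffOn ℝ 2 h1 (closedBall 0 1))
    (g2 : ContDiffOn ℝ 2 h2 (closedBall 0 1)) (gφ : ContDiffOn ℝ 2 φ (closedBall 0 1))
    (gψ : ContDiffOn ℝ 2 ψ (closedBall 0 1)) (hpos : ∀ y, ‖y‖ ≤ 1 → 0 < ε + h1 y - h2 y)
    {u : Efull n → ℝ} (hu : AttainsBV n ε h1 h2 u φ ψ) {t : ℝ} (ht : 0 < t) :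
    ∃ K, IsCompact K ∧ K ⊆ Omega n ε h1 h2 1 ∧
      ∀ x ∈ Omega n ε h1 h2 1, ‖x.1‖ ≤ 3/4 → t ≤ |u x - util n ε h1 h2 φ ψ x| → x ∈ K := by
  set R := {x : Efull n | ‖x.1‖ ≤ 3/4 ∧ -ε/2 + h2 x.1 ≤ x.2 ∧ x.2 ≤ ε/2 + h1 x.1} with hR
  have hRc : IsCompact R := isCompact_closedRegion g1 g2 hpos
  have hRsub : R ⊆ Omega n ε h1 h2 1 ∪ Gammap n ε h1 1 ∪ Gammam n ε h2 1 := by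
    rintro x ⟨ha, hl, hu'⟩
    have ha1 : ‖x.1‖ < 1 := by linarith
    rcases hl.eq_or_lt with e | hl
    · exact Or.inr ⟨ha1.le, e.symm⟩
    rcases hu'.eq_or_lt with e | hu'
    · exact Or.inl (Or.inr ⟨ha1.le, e⟩)
    · exact Or.inl (Or.inl ⟨ha1, hl, hu'⟩)
  have cw : ContinuousOn (fun x => |u x - util n ε h1 h2 φ ψ x|) R :=
    ((hu.1.mono hRsub).sub (util_contDiffOn g1 g2 gφ gψ hpos
      (fun x hx => hx.1.trans (by norm_num))).continuousOn).abs
  refine ⟨R ∩ (fun x => |u x - util n ε h1 h2 φ ψ x|) ⁻¹' Set.Ici t, ?_, ?_, ?_⟩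
  · exact hRc.of_isClosed_subset (cw.preimage_isClosed_of_isClosed hRc.isClosed isClosed_Ici)
      Set.inter_subset_left
  · rintro x ⟨hx, hxt⟩
    have hx1 : ‖x.1‖ ≤ 1 := hx.1.trans (by norm_num)
    rcases hRsub hx with (h | h) | h
    · exact h
    · exfalso
      have e : x = (x.1, ε/2 + h1 x.1) := Prod.ext rfl h.2
      have : u x - util n ε h1 h2 φ ψ x = 0 := by
        rw [e, (hu.2 _ hx1).1, util_top (hpos _ hx1), sub_self]
      simp only [Set.mem_preimage, this, abs_zero, Set.mem_Ici] at hxt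
      linarith
    · exfalso
      have e : x = (x.1, -ε/2 + h2 x.1) := Prod.ext rfl h.2
      have : u x - util n ε h1 h2 φ ψ x = 0 := by
        rw [e, (hu.2 _ hx1).2, util_bottom, sub_self]
      simp only [Set.mem_preimage, this, abs_zero, Set.mem_Ici] at hxt
      linarith
  · intro x hx h3 hxt
    exact ⟨⟨h3, hx.2.1.le, hx.2.2.le⟩, hxt⟩

lemma memLp_of_bound (hfin : volume (Omega n ε h1 h2 1) < ⊤)
    (hΩ : IsOpen (Omega n ε h1 h2 1)) {f : Efull n → ℝ}
    (hf : ContinuousOn f (Omega n ε h1 h2 1)) {B : ℝ}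
    (hB : ∀ x ∈ Omega n ε h1 h2 1, |f x| ≤ B) :
    MemLp f 2 (volume.restrict (Omega n ε h1 h2 1)) := by
  have : IsFiniteMeasure (volume.restrict (Omega n ε h1 h2 1)) := ⟨by simpa using hfin⟩
  refine MemLp.of_bound (hf.aestronglyMeasurable hΩ.measurableSet) B ?_
  filter_upwards [ae_restrict_mem hΩ.measurableSet] with x hx using hB x hx

lemma lapl_sub {Ω : Set (Efull n)} (hΩ : IsOpen Ω) {f g : Efull n → ℝ} (hf : ContDiffOn ℝ 2 f Ω)
    (hg : ContDiffOn ℝ 2 g Ω) {x : Efull n} (hx : x ∈ Ω) :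
    lapl n (fun z => f z - g z) x = lapl n f x - lapl n g x := by
  unfold lapl
  rw [← Finset.sum_sub_distrib]
  refine Finset.sum_congr rfl fun α _ => ?_
  have hdf : ∀ {k : Efull n → ℝ}, ContDiffOn ℝ 2 k Ω →
      DifferentiableAt ℝ (fun y => fderiv ℝ k y (dir n α)) x := fun {k} hk =>
    ((((hk.fderiv_of_isOpen hΩ (m := 1) (by norm_num)).clm_apply contDiffOn_const).contDiffAt
      (hΩ.mem_nhds hx)).differentiableAt (by norm_num))
  have e : (fun y => fderiv ℝ (fun z => f z - g z) y (dir n α)) =ᶠ[𝓝 x]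
      fun y => fderiv ℝ f y (dir n α) - fderiv ℝ g y (dir n α) := by
    filter_upwards [hΩ.mem_nhds hx] with y hy
    rw [fderiv_fun_sub ((hf.contDiffAt (hΩ.mem_nhds hy)).differentiableAt (by norm_num))
      ((hg.contDiffAt (hΩ.mem_nhds hy)).differentiableAt (by norm_num))]
    rfl
  rw [e.fderiv_eq, fderiv_fun_sub (hdf hf) (hdf hg)]
  rfl

/-- Regularity and square-integrability of `w = u - ũ`, as required by the energy inequality. -/
lemma w_facts (hε : 0 < ε) (hC₀ : 1 ≤ C₀)
    (g1 : ContDiffOn ℝ 2 h1 (closedBall 0 1)) (g2 : ContDiffOn ℝ 2 h2 (closedBall 0 1))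
    (z1 : fderiv ℝ h1 0 = 0) (z2 : fderiv ℝ h2 0 = 0)
    (hκ : C2norm n h1 + C2norm n h2 ≤ κ1)
    (hδ : DeltaComp n ε C₀ h1 h2) (gφ : ContDiffOn ℝ 2 φ (closedBall 0 1))
    (gψ : ContDiffOn ℝ 2 ψ (closedBall 0 1))
    {u w : Efull n → ℝ} (hu : HarmBV n ε h1 h2 u φ ψ)
    (hwdef : w = fun z => u z - util n ε h1 h2 φ ψ z) :
    ContDiffOn ℝ 2 w (Omega n ε h1 h2 1) ∧
    MemLp w 2 (volume.restrict (Omega n ε h1 h2 1)) ∧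
    (∀ α, MemLp (fun x => fderiv ℝ w x (dir n α)) 2 (volume.restrict (Omega n ε h1 h2 1))) ∧
    MemLp (lapl n w) 2 (volume.restrict (Omega n ε h1 h2 1)) ∧
    ∀ x ∈ Omega n ε h1 h2 1, |lapl n w x| = |lapl n (util n ε h1 h2 φ ψ) x| := by
  have hpos : ∀ y : Ep n, ‖y‖ ≤ 1 → 0 < ε + h1 y - h2 y := fun y hy => (gap_pos hε hC₀ hδ hy).2
  have hΩ : IsOpen (Omega n ε h1 h2 1) := Omega_isOpen g1.continuousOn g2.continuousOn le_rfl
  have hfin := Omega_volume_lt_top (ε := ε) g1 g2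
  obtain ⟨cu, lu, iu, bu⟩ := hu
  have ct : ContDiffOn ℝ 2 (util n ε h1 h2 φ ψ) (Omega n ε h1 h2 1) :=
    util_contDiffOn g1 g2 gφ gψ hpos fun x hx => hx.1.le
  have cw : ContDiffOn ℝ 2 w (Omega n ε h1 h2 1) := by rw [hwdef]; exact cu.sub ct
  have cfd : ∀ {k : Efull n → ℝ}, ContDiffOn ℝ 2 k (Omega n ε h1 h2 1) → ∀ v,
      ContDiffOn ℝ 1 (fun y => fderiv ℝ k y v) (Omega n ε h1 h2 1) := fun {k} hk v =>
    (hk.fderiv_of_isOpen hΩ (by norm_num)).clm_apply contDiffOn_const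
  have lw : ∀ x ∈ Omega n ε h1 h2 1, lapl n w x = - lapl n (util n ε h1 h2 φ ψ) x := by
    intro x hx
    rw [hwdef, lapl_sub hΩ cu ct hx, lu x hx, zero_sub]
  -- square integrability of `u` and of its derivatives
  have mu : MemLp u 2 (volume.restrict (Omega n ε h1 h2 1)) := by
    rw [memLp_two_iff_integrable_sq (cu.continuousOn.aestronglyMeasurable hΩ.measurableSet)]
    refine Integrable.mono' iu
      ((cu.continuousOn.pow 2).aestronglyMeasurable hΩ.measurableSet)
      (Eventually.of_forall fun x => ?_)
    have := sq_nonneg ‖fderiv ℝ u x‖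
    rw [norm_pow]; linarith
  have mdu : ∀ α, MemLp (fun x => fderiv ℝ u x (dir n α)) 2
      (volume.restrict (Omega n ε h1 h2 1)) := by
    intro α
    have cc := (cfd cu (dir n α)).continuousOn
    rw [memLp_two_iff_integrable_sq (cc.aestronglyMeasurable hΩ.measurableSet)]
    refine Integrable.mono' iu ((cc.pow 2).aestronglyMeasurable hΩ.measurableSet)
      (Eventually.of_forall fun x => ?_)
    have h0 := sq_nonneg ‖u x‖
    have hd : ‖dir n α‖ ≤ 1 := by
      rw [Prod.norm_def, max_le_iff]; exact norm_dir_le α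
    have : ‖fderiv ℝ u x (dir n α)‖ ≤ ‖fderiv ℝ u x‖ :=
      (ContinuousLinearMap.le_opNorm _ _).trans (mul_le_of_le_one_right (norm_nonneg _) hd)
    have h2' := pow_le_pow_left₀ (norm_nonneg _) this 2
    rw [norm_pow]; linarith
  have mt : MemLp (util n ε h1 h2 φ ψ) 2 (volume.restrict (Omega n ε h1 h2 1)) := by
    refine memLp_of_bound hfin hΩ ct.continuousOn (B := C2norm n φ + C2norm n ψ) fun x hx => ?_
    have b := ubar_mem hx
    have f1 := (C2norm_bounds gφ hx.1.le).1
    have f2 := (C2norm_bounds gψ hx.1.le).1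
    unfold util
    refine (abs_add_le _ _).trans (add_le_add ?_ ?_)
    · rw [abs_mul]
      exact (mul_le_of_le_one_right (abs_nonneg _) (abs_le.2 ⟨by linarith [b.1], b.2⟩)).trans f1
    · rw [abs_mul]
      exact (mul_le_of_le_one_right (abs_nonneg _)
        (abs_le.2 ⟨by linarith [b.2], by linarith [b.1]⟩)).trans f2
  obtain ⟨Kt, hKt⟩ := utilD_bound hε hC₀ g1 g2 z1 z2 hκ hδ gφ gψ
  have mdt : ∀ α, MemLp (fun x => fderiv ℝ (util n ε h1 h2 φ ψ) x (dir n α)) 2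
      (volume.restrict (Omega n ε h1 h2 1)) := fun α =>
    memLp_of_bound hfin hΩ (cfd ct _).continuousOn fun x hx => hKt x hx α
  refine ⟨cw, ?_, ?_, ?_, fun x hx => by rw [lw x hx, abs_neg]⟩
  · rw [hwdef]; exact mu.sub mt
  · intro α
    refine ((mdu α).sub (mdt α)).ae_eq ?_
    filter_upwards [ae_restrict_mem hΩ.measurableSet] with x hx
    rw [hwdef, fderiv_fun_sub ((cu.contDiffAt (hΩ.mem_nhds hx)).differentiableAt (by norm_num))
      ((ct.contDiffAt (hΩ.mem_nhds hx)).differentiableAt (by norm_num))]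
    rfl
  · have cl : ContinuousOn (lapl n w) (Omega n ε h1 h2 1) := by
      unfold lapl
      refine continuousOn_finsetSum _ fun α _ => ?_
      exact (((cfd cw (dir n α)).continuousOn_fderiv_of_isOpen hΩ (by norm_num)).clm_apply
        continuousOn_const)
    refine memLp_of_bound hfin hΩ cl (B := (C₀ / ε) * (n * ((C2norm n φ + C2norm n ψ) * (C₀ * (ε + 1))
      + 6 * κ1 * (C2norm n φ + C2norm n ψ) + (C2norm n φ + C2norm n ψ) * (3*κ1+12*κ1^2*C₀))))
      fun x hx => ?_
    have n1 := C2norm_nonneg h1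
    have n2 := C2norm_nonneg h2
    have n3 := C2norm_nonneg φ
    have n4 := C2norm_nonneg ψ
    have hκ1 : 0 ≤ κ1 := by linarith
    have hb := lapl_util_bound hε hC₀ g1 g2 z1 z2 hκ hδ gφ gψ hx
    have hg := (gap_pos hε hC₀ hδ hx.1.le).1
    have hg2 := (hδ x.1 hx.1.le).2
    have hx1 : ‖x.1‖ ≤ 1 := hx.1.le
    have hx2 : ‖x.1‖ ^ 2 ≤ 1 := pow_le_one₀ (norm_nonneg _) hx1
    have hφψ : |φ x.1 - ψ x.1| ≤ C2norm n φ + C2norm n ψ :=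
      (abs_sub _ _).trans (add_le_add (C2norm_bounds gφ hx1).1 (C2norm_bounds gψ hx1).1)
    rw [lw x hx, abs_neg]
    have hb2 : ε / C₀ * |lapl n (util n ε h1 h2 φ ψ) x| ≤
        n * ((C2norm n φ + C2norm n ψ) * (C₀ * (ε + 1))
      + 6 * κ1 * (C2norm n φ + C2norm n ψ) + (C2norm n φ + C2norm n ψ) * (3*κ1+12*κ1^2*C₀)) := by
      refine (mul_le_mul_of_nonneg_right hg (abs_nonneg _)).trans (hb.trans ?_)
      refine mul_le_mul_of_nonneg_left (add_le_add (add_le_add ?_ ?_) ?_) (Nat.cast_nonneg n)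
      · gcongr
        exact hg2.trans (by gcongr)
      · exact mul_le_of_le_one_right (by positivity) hx1
      · gcongr
    calc |lapl n (util n ε h1 h2 φ ψ) x| = (C₀ / ε) * (ε / C₀ * |lapl n (util n ε h1 h2 φ ψ) x|) := by
          field_simp
      _ ≤ _ := by gcongr

end

/-! ### The weight -/

lemma exists_cutoff (n : ℕ) : ∃ χ : Ep n → ℝ, ∃ L : ℝ, 0 ≤ L ∧ ContDiff ℝ 1 χ ∧
    (∀ y, 0 ≤ χ y ∧ χ y ≤ 1) ∧ (∀ y, ‖y‖ ≤ 5/8 → χ y = 1) ∧ (∀ y, χ y ≠ 0 → ‖y‖ ≤ 3/4) ∧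
    (∀ y, ‖fderiv ℝ χ y‖ ≤ L) := by
  let f : ContDiffBump (0 : Ep n) := ⟨5/8, 3/4, by norm_num, by norm_num⟩
  have hf : ContDiff ℝ 1 f := f.contDiff
  have hc : HasCompactSupport (fderiv ℝ f) := f.hasCompactSupport.fderiv ℝ
  obtain ⟨L, hL⟩ := hc.exists_bound_of_continuous (hf.continuous_fderiv (by norm_num))
  refine ⟨f, L, (norm_nonneg _).trans (hL 0), hf, fun y => ⟨f.nonneg, f.le_one⟩, ?_, ?_, hL⟩
  · intro y hy
    exact f.one_of_mem_closedBall (by simpa [f] using hy)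
  · intro y hy
    have : y ∈ Function.support f := hy
    rw [f.support_eq] at this
    simpa [f] using (mem_ball_zero_iff.1 this).le

section
variable {n : ℕ}

/-- The algebraic weight `(1 + a²|y - y₀|²)^{-m}`. -/
def algWeight (a : ℝ) (m : ℕ) (y₀ y : Ep n) : ℝ := ((1 + a ^ 2 * ‖y - y₀‖ ^ 2) ^ m)⁻¹

lemma algWeight_pos (a : ℝ) (m : ℕ) (y₀ y : Ep n) : 0 < algWeight a m y₀ y := by
  unfold algWeight; positivity

lemma algWeight_le_one (a : ℝ) (m : ℕ) (y₀ y : Ep n) : algWeight a m y₀ y ≤ 1 := by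
  unfold algWeight
  refine inv_le_one_of_one_le₀ (one_le_pow₀ ?_)
  have : 0 ≤ a ^ 2 * ‖y - y₀‖ ^ 2 := by positivity
  linarith

lemma algWeight_contDiff (a : ℝ) (m : ℕ) (y₀ : Ep n) : ContDiff ℝ 1 (algWeight a m y₀) := by
  unfold algWeight
  refine ContDiff.inv ?_ fun y => by positivity
  exact (contDiff_const.add (contDiff_const.mul ((contDiff_id.sub contDiff_const).norm_sq ℝ))).pow m

lemma algWeight_fderiv (a : ℝ) (m : ℕ) (y₀ y : Ep n) :
    ‖fderiv ℝ (algWeight a m y₀) y‖ ≤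
      2 * m * a ^ 2 * ‖y - y₀‖ / (1 + a ^ 2 * ‖y - y₀‖ ^ 2) * algWeight a m y₀ y := by
  set q := 1 + a ^ 2 * ‖y - y₀‖ ^ 2 with hq
  have hq0 : 0 < q := by positivity
  have d1 : HasFDerivAt (fun z : Ep n => 1 + a ^ 2 * ‖z - y₀‖ ^ 2)
      (a ^ 2 • (2 • (innerSL ℝ (y - y₀)).comp (ContinuousLinearMap.id ℝ (Ep n)))) y := by
    have : HasFDerivAt (fun z : Ep n => z - y₀) (ContinuousLinearMap.id ℝ (Ep n)) y :=
      (hasFDerivAt_id y).sub_const y₀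
    exact (this.norm_sq.const_mul _).const_add 1
  have d2 : HasDerivAt (fun s : ℝ => (s ^ m)⁻¹) (-(m * q ^ (m - 1)) / (q ^ m) ^ 2) q :=
    (hasDerivAt_pow m q).fun_inv (by positivity)
  have d3' := HasDerivAt.comp_hasFDerivAt (h₂ := fun s : ℝ => (s ^ m)⁻¹)
    (f := fun z : Ep n => 1 + a ^ 2 * ‖z - y₀‖ ^ 2) y d2 d1
  have d3 : HasFDerivAt (algWeight a m y₀) _ y := d3'
  rw [d3.fderiv, norm_smul, norm_smul]
  have e1 : ‖(2 • (innerSL ℝ (y - y₀)).comp (ContinuousLinearMap.id ℝ (Ep n)) : Ep n →L[ℝ] ℝ)‖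
      ≤ 2 * ‖y - y₀‖ := by
    rw [ContinuousLinearMap.comp_id]
    refine (norm_nsmul_le).trans ?_
    rw [innerSL_apply_norm]; simp
  have e2 : ‖(-(m * q ^ (m - 1)) / (q ^ m) ^ 2 : ℝ)‖ = m / q * (q ^ m)⁻¹ := by
    rw [norm_div, norm_neg, Real.norm_of_nonneg (by positivity), Real.norm_of_nonneg (by positivity)]
    rcases m with _ | m
    · simp
    · simp only [Nat.add_sub_cancel]
      field_simp
      ring
  rw [e2]
  have e3 : algWeight a m y₀ y = (q ^ m)⁻¹ := rfl
  rw [e3]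
  have e4 : ‖a ^ 2‖ = a ^ 2 := Real.norm_of_nonneg (by positivity)
  rw [e4]
  calc _ ≤ m / q * (q ^ m)⁻¹ * (a ^ 2 * (2 * ‖y - y₀‖)) := by gcongr
    _ = _ := by ring

/-- On the natural scale of the weight, its logarithmic derivative is small compared with the
inverse of the gap width. -/
lemma weight_near {N m C₀ D ρ a s d : ℝ} (hN : 0 ≤ N) (hm : 0 ≤ m) (hC : 0 < C₀) (hD : 0 < D)
    (hρ : 0 < ρ) (ha : a = ρ / D) (hs : 0 ≤ s) (hsρ : s ≤ ρ) (hd : d ≤ 2 * C₀ * (D + s ^ 2))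
    (hsmall : 24 * N * m * C₀ * ρ ≤ 1) :
    2 * m * a ^ 2 * s / (1 + a ^ 2 * s ^ 2) * d * (4 * N) ≤ 1 := by
  have ha0 : 0 < a := by rw [ha]; positivity
  have haD : a * D = ρ := by rw [ha]; field_simp
  have h1 : a ^ 2 * s * d ≤ 3 * C₀ * ρ * (1 + a ^ 2 * s ^ 2) := by
    calc a ^ 2 * s * d ≤ a ^ 2 * s * (2 * C₀ * (D + s ^ 2)) := by gcongr
      _ = 2 * C₀ * (ρ * (a * s) + a ^ 2 * s ^ 2 * s) := by rw [← haD]; ring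
      _ ≤ 2 * C₀ * (ρ * ((1 + a ^ 2 * s ^ 2) / 2) + a ^ 2 * s ^ 2 * ρ) := by
          gcongr
          nlinarith [sq_nonneg (a * s - 1)]
      _ = 3 * C₀ * ρ * (1 + a ^ 2 * s ^ 2) - 2 * C₀ * ρ := by ring
      _ ≤ _ := by nlinarith [mul_pos hC hρ]
  have hq : 0 < 1 + a ^ 2 * s ^ 2 := by positivity
  calc _ = 8 * m * N * (a ^ 2 * s * d) / (1 + a ^ 2 * s ^ 2) := by ring
    _ ≤ 8 * m * N * (3 * C₀ * ρ * (1 + a ^ 2 * s ^ 2)) / (1 + a ^ 2 * s ^ 2) := by gcongr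
    _ = 24 * N * m * C₀ * ρ := by field_simp; ring
    _ ≤ 1 := hsmall

/-- At distance more than `ρ` from the centre, the weight is as small as `D^{2m}`. -/
lemma algWeight_far {D ρ a : ℝ} {m : ℕ} (hD : 0 < D) (hρ : 0 < ρ) (ha : a = ρ / D) {y₀ y : Ep n}
    (hs : ρ < ‖y - y₀‖) :
    algWeight a m y₀ y ≤ (D ^ 2 / ρ ^ 4) ^ m ∧
    2 * m * a ^ 2 * ‖y - y₀‖ / (1 + a ^ 2 * ‖y - y₀‖ ^ 2) ≤ 2 * m / ρ := by
  have ha0 : 0 < a := by rw [ha]; positivity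
  set s := ‖y - y₀‖
  constructor
  · have : D ^ 2 / ρ ^ 4 = (a ^ 2 * ρ ^ 2)⁻¹ := by rw [ha]; field_simp
    rw [this]
    unfold algWeight
    rw [inv_pow]
    gcongr
    have : a ^ 2 * ρ ^ 2 ≤ a ^ 2 * s ^ 2 := by gcongr
    linarith
  · rw [div_le_div_iff₀ (by positivity) hρ]
    have : a ^ 2 * s * ρ ≤ a ^ 2 * s * s := by gcongr
    have hm : (0:ℝ) ≤ m := Nat.cast_nonneg m
    nlinarith [mul_nonneg hm (sub_nonneg.2 this)]

/-- The derivative of the weight `η = χ · algWeight` is dominated by `η/δ` up to a remainder of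
size `D^{2m}`. -/
lemma weight_bound {ε C₀ D ρ a L : ℝ} {h1 h2 χ : Ep n → ℝ} {m : ℕ} {y₀ : Ep n}
    (hε : 0 < ε) (hn : 2 ≤ n) (hC₀ : 1 ≤ C₀) (hδ : DeltaComp n ε C₀ h1 h2) (hD : D = ε + ‖y₀‖ ^ 2)
    (hy₀ : ‖y₀‖ < 1/2) (hρ : 0 < ρ) (hρ8 : ρ ≤ 1/16) (hsmall : 24 * n * m * C₀ * ρ ≤ 1)
    (ha : a = ρ / D) (hL : 0 ≤ L) (hχ : ContDiff ℝ 1 χ) (hχ01 : ∀ y, 0 ≤ χ y ∧ χ y ≤ 1)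
    (hχ1 : ∀ y, ‖y‖ ≤ 5/8 → χ y = 1) (hχL : ∀ y, ‖fderiv ℝ χ y‖ ≤ L) :
    (∀ y, ‖fderiv ℝ (fun y => χ y * algWeight a m y₀ y) y‖ ≤ 1 + L + 2 * m * a) ∧
    ∀ y, ‖y‖ < 1 → 4 * n * ‖fderiv ℝ (fun y => χ y * algWeight a m y₀ y) y‖ ^ 2 ≤
      (1/4) * (χ y * algWeight a m y₀ y / (ε + h1 y - h2 y)) ^ 2 +
        4 * n * ((2 * m / ρ + L) * (D ^ 2 / ρ ^ 4) ^ m) ^ 2 := by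
  have hD0 : 0 < D := by rw [hD]; positivity
  have ha0 : 0 < a := by rw [ha]; positivity
  have hn0 : (0:ℝ) < n := by exact_mod_cast (by omega : 0 < n)
  have hfd : ∀ y, fderiv ℝ (fun y => χ y * algWeight a m y₀ y) y =
      χ y • fderiv ℝ (algWeight a m y₀) y + algWeight a m y₀ y • fderiv ℝ χ y := fun y =>
    fderiv_fun_mul (hχ.differentiable (by norm_num) y)
      ((algWeight_contDiff a m y₀).differentiable (by norm_num) y)
  have hgen : ∀ y, ‖fderiv ℝ (fun y => χ y * algWeight a m y₀ y) y‖ ≤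
      (2 * m * a ^ 2 * ‖y - y₀‖ / (1 + a ^ 2 * ‖y - y₀‖ ^ 2) + L) * algWeight a m y₀ y := by
    intro y
    have w0 := algWeight_pos a m y₀ y
    rw [hfd]
    refine (norm_add_le _ _).trans ?_
    rw [norm_smul, norm_smul, Real.norm_of_nonneg (hχ01 y).1, Real.norm_of_nonneg w0.le, add_mul]
    refine add_le_add ((mul_le_of_le_one_left (norm_nonneg _) (hχ01 y).2).trans
      (algWeight_fderiv a m y₀ y)) ?_
    rw [mul_comm]
    gcongr
    exact hχL y
  constructor
  · intro y
    refine (hgen y).trans ?_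
    have w0 := algWeight_pos a m y₀ y
    refine (mul_le_of_le_one_right (by positivity) (algWeight_le_one a m y₀ y)).trans ?_
    have : 2 * m * a ^ 2 * ‖y - y₀‖ / (1 + a ^ 2 * ‖y - y₀‖ ^ 2) ≤ 2 * m * a := by
      rw [div_le_iff₀ (by positivity)]
      have h : a * ‖y - y₀‖ ≤ 1 + a ^ 2 * ‖y - y₀‖ ^ 2 := by
        nlinarith [sq_nonneg (a * ‖y - y₀‖ - 1), sq_nonneg (a * ‖y - y₀‖)]
      calc 2 * m * a ^ 2 * ‖y - y₀‖ = 2 * m * a * (a * ‖y - y₀‖) := by ring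
        _ ≤ _ := by gcongr
    linarith
  · intro y hy
    have hg := (gap_pos hε hC₀ hδ hy.le).2
    set g := ε + h1 y - h2 y with hgdef
    have w0 := algWeight_pos a m y₀ y
    by_cases hs : ‖y - y₀‖ ≤ ρ
    · have hy2 : ‖y‖ < 5/8 := by
        have := norm_le_norm_add_norm_sub' y y₀
        linarith
      have hd0 : fderiv ℝ χ y = 0 := by
        have : χ =ᶠ[𝓝 y] fun _ => (1:ℝ) := by
          have : ball (0 : Ep n) (5/8) ∈ 𝓝 y := isOpen_ball.mem_nhds (by simpa using hy2)
          filter_upwards [this] with z hz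
          exact hχ1 z (by simpa using (mem_ball_zero_iff.1 hz).le)
        rw [this.fderiv_eq]; simp
      have hgd : g ≤ 2 * C₀ * (D + ‖y - y₀‖ ^ 2) := by
        refine (hδ y hy.le).2.trans ?_
        have h1' : ‖y‖ ≤ ‖y₀‖ + ‖y - y₀‖ := norm_le_norm_add_norm_sub' y y₀
        have h2' : ‖y‖ ^ 2 ≤ (‖y₀‖ + ‖y - y₀‖) ^ 2 := by gcongr
        have h3' : ε + ‖y‖ ^ 2 ≤ 2 * (D + ‖y - y₀‖ ^ 2) := by
          rw [hD]; nlinarith [sq_nonneg (‖y₀‖ - ‖y - y₀‖)]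
        nlinarith
      have hnear := weight_near (N := n) (m := m) hn0.le (Nat.cast_nonneg m) (by linarith) hD0 hρ ha
        (norm_nonneg (y - y₀)) hs hgd hsmall
      have hχy := hχ1 y hy2.le
      rw [hfd, hχy, hd0, smul_zero, add_zero, one_smul, one_mul]
      have hf := algWeight_fderiv a m y₀ y
      set r := 2 * m * a ^ 2 * ‖y - y₀‖ / (1 + a ^ 2 * ‖y - y₀‖ ^ 2)
      have h4 : 4 * n * ‖fderiv ℝ (algWeight a m y₀) y‖ ≤ algWeight a m y₀ y / g := by
        rw [le_div_iff₀ hg]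
        calc _ ≤ 4 * n * (r * algWeight a m y₀ y) * g := by gcongr
          _ = (r * g * (4 * n)) * algWeight a m y₀ y := by ring
          _ ≤ 1 * algWeight a m y₀ y := by gcongr
          _ = _ := one_mul _
      have h5 := pow_le_pow_left₀ (by positivity) h4 2
      have h6 : (1:ℝ) ≤ n := by exact_mod_cast (by omega : 1 ≤ n)
      have h7 : 0 ≤ 4 * n * ((2 * m / ρ + L) * (D ^ 2 / ρ ^ 4) ^ m) ^ 2 := by positivity
      have h8 : 4 * n * ‖fderiv ℝ (algWeight a m y₀) y‖ ^ 2 ≤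
          (1/4) * (4 * n * ‖fderiv ℝ (algWeight a m y₀) y‖) ^ 2 := by
        have : 0 ≤ ‖fderiv ℝ (algWeight a m y₀) y‖ ^ 2 := by positivity
        nlinarith [mul_nonneg (mul_nonneg hn0.le (sub_nonneg.2 h6)) this]
      linarith
    · push Not at hs
      obtain ⟨f1, f2⟩ := algWeight_far (m := m) hD0 hρ ha hs
      have : ‖fderiv ℝ (fun y => χ y * algWeight a m y₀ y) y‖ ≤
          (2 * m / ρ + L) * (D ^ 2 / ρ ^ 4) ^ m := (hgen y).trans (by gcongr)
      have h0 : 0 ≤ (1/4) * (χ y * algWeight a m y₀ y / g) ^ 2 := by positivity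
      have h1 : 4 * n * ‖fderiv ℝ (fun y => χ y * algWeight a m y₀ y) y‖ ^ 2 ≤
          4 * n * ((2 * m / ρ + L) * (D ^ 2 / ρ ^ 4) ^ m) ^ 2 := by gcongr
      linarith

end

/-! ### Integrals of the source term -/

/-- Integration in the vertical variable over the slices of the narrow region. -/
lemma slab_integral_le {n : ℕ} {ε : ℝ} {h1 h2 : Ep n → ℝ} (hΩ : IsOpen (Omega n ε h1 h2 1))
    {F G : Ep n → ℝ} (hF : Continuous F) (hF0 : ∀ y, 0 ≤ F y) (hG : Integrable G)
    (hG0 : ∀ y, 0 ≤ G y)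
    (h : ∀ y, ‖y‖ < 1 → F y * (ε + h1 y - h2 y) ≤ G y) :
    IntegrableOn (fun x => F x.1) (Omega n ε h1 h2 1) ∧
    ∫ x in Omega n ε h1 h2 1, F x.1 ≤ ∫ y, G y := by
  have hm : Measurable fun x : Efull n => ENNReal.ofReal (F x.1) :=
    (hF.measurable.comp measurable_fst).ennreal_ofReal
  have key : ∫⁻ x in Omega n ε h1 h2 1, ENNReal.ofReal (F x.1) ≤ ∫⁻ y, ENNReal.ofReal (G y) := by
    rw [← lintegral_indicator hΩ.measurableSet, Measure.volume_eq_prod,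
      lintegral_prod _ (hm.indicator hΩ.measurableSet).aemeasurable]
    refine lintegral_mono fun y => ?_
    by_cases hy : ‖y‖ < 1
    · calc ∫⁻ t, (Omega n ε h1 h2 1).indicator (fun x => ENNReal.ofReal (F x.1)) (y, t)
          = ∫⁻ t, (Set.Ioo (-ε/2 + h2 y) (ε/2 + h1 y)).indicator
              (fun _ => ENNReal.ofReal (F y)) t := by
            refine lintegral_congr fun t => ?_
            have : (y, t) ∈ Omega n ε h1 h2 1 ↔ t ∈ Set.Ioo (-ε/2 + h2 y) (ε/2 + h1 y) :=
              ⟨fun h => h.2, fun h => ⟨hy, h⟩⟩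
            by_cases ht : t ∈ Set.Ioo (-ε/2 + h2 y) (ε/2 + h1 y)
            · rw [Set.indicator_of_mem ht, Set.indicator_of_mem (this.2 ht)]
            · rw [Set.indicator_of_notMem ht, Set.indicator_of_notMem (fun h => ht (this.1 h))]
        _ = ENNReal.ofReal (F y) * ENNReal.ofReal (ε + h1 y - h2 y) := by
            rw [lintegral_indicator measurableSet_Ioo, setLIntegral_const, Real.volume_Ioo]
            congr 2; ring
        _ = ENNReal.ofReal (F y * (ε + h1 y - h2 y)) := (ENNReal.ofReal_mul (hF0 y)).symm
        _ ≤ _ := ENNReal.ofReal_le_ofReal (h y hy)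
    · have : ∀ t, (Omega n ε h1 h2 1).indicator (fun x => ENNReal.ofReal (F x.1)) (y, t) = 0 :=
        fun t => Set.indicator_of_notMem (fun h => hy h.1) _
      simp [this]
  have hfin : ∫⁻ y, ENNReal.ofReal (G y) < ⊤ := hG.lintegral_lt_top
  have hi : IntegrableOn (fun x : Efull n => F x.1) (Omega n ε h1 h2 1) := by
    refine ⟨(hF.comp continuous_fst).aestronglyMeasurable, ?_⟩
    rw [hasFiniteIntegral_iff_ofReal (Eventually.of_forall fun x : Efull n => hF0 x.1)]
    exact key.trans_lt hfin
  refine ⟨hi, ?_⟩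
  rw [integral_eq_lintegral_of_nonneg_ae (Eventually.of_forall fun x : Efull n => hF0 x.1) hi.1,
    integral_eq_lintegral_of_nonneg_ae (Eventually.of_forall hG0) hG.1]
  exact ENNReal.toReal_mono hfin.ne key

/-- The kernel `(1 + a²|y - y₀|²)^{-2n}` has mass proportional to `a^{-(n-1)}`. -/
lemma kernel_integral {n : ℕ} (hn : 2 ≤ n) {a : ℝ} (ha : 0 < a) (y₀ : Ep n) :
    Integrable (algWeight a (2 * n) y₀) ∧
    ∫ y, algWeight a (2 * n) y₀ y = (a ^ (n - 1))⁻¹ * ∫ z : Ep n, ((1 + ‖z‖ ^ 2) ^ (2 * n))⁻¹ := by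
  have h0 : Integrable (fun z : Ep n => ((1 + ‖z‖ ^ 2) ^ (2 * n))⁻¹) := by
    have hr : (Module.finrank ℝ (Ep n) : ℝ) < 4 * n := by
      rw [finrank_euclideanSpace_fin]
      exact_mod_cast (by omega : n - 1 < 4 * n)
    refine (integrable_rpow_neg_one_add_norm_sq (μ := volume) hr).congr
      (Eventually.of_forall fun z => ?_)
    have : (-(4 * n : ℝ) / 2) = -((2 * n : ℕ) : ℝ) := by push_cast; ring
    simp only [this]
    rw [Real.rpow_neg (by positivity), Real.rpow_natCast]
  have e : algWeight a (2 * n) y₀ = fun y => (fun z : Ep n => ((1 + ‖z‖ ^ 2) ^ (2 * n))⁻¹)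
      (a • (y - y₀)) := by
    funext y
    simp only [algWeight, norm_smul, mul_pow, Real.norm_of_nonneg ha.le]
  rw [e]
  constructor
  · exact (h0.comp_smul ha.ne').comp_sub_right y₀
  · rw [integral_sub_right_eq_self (fun y : Ep n => (fun z : Ep n => ((1 + ‖z‖ ^ 2) ^ (2 * n))⁻¹)
      (a • y)) y₀, Measure.integral_comp_smul volume (fun z : Ep n => ((1 + ‖z‖ ^ 2) ^ (2 * n))⁻¹), finrank_euclideanSpace_fin, smul_eq_mul, abs_of_pos]
    positivity

lemma lipschitz_of_C2 {n : ℕ} {f : Ep n → ℝ} (hf : ContDiffOn ℝ 2 f (closedBall 0 1)) {y z : Ep n}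
    (hy : ‖y‖ < 1) (hz : ‖z‖ < 1) : |f y - f z| ≤ C2norm n f * ‖y - z‖ := by
  refine (convex_ball (0 : Ep n) 1).norm_image_sub_le_of_norm_fderiv_le (𝕜 := ℝ) (f := f) ?_ ?_
    (mem_ball_zero_iff.2 hz) (mem_ball_zero_iff.2 hy)
  · intro x hx
    exact (diff_of_C2 hf (mem_ball_zero_iff.1 hx)).1
  · intro x hx
    exact (C2norm_bounds hf (mem_ball_zero_iff.1 hx).le).2.1

/-- Scalar form of the source estimate: `T` stands for `D + |x' - x₀'|²`, `X` for `|x'|`,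
`s` for `|x' - x₀'|`, `F` for `|φ - ψ|(x')` and `P` for `|φ - ψ|(x₀')`. -/
lemma scalar_source {N M δ X F P s T κ c C₀ V : ℝ} (hδ0 : 0 ≤ δ)
    (hF : 0 ≤ F) (hV0 : 0 ≤ V) (hT4 : T ≤ 4)
    (hV : V ≤ N * (M * δ + 6 * κ * M * X + F * c)) (hδ : δ ≤ 2 * C₀ * T) (hXT : X ^ 2 ≤ 2 * T)
    (hFP : F ≤ P + M * s) (hsT : s ^ 2 ≤ T) :
    V ^ 2 ≤ 3 * N ^ 2 * (16 * C₀ ^ 2 + 72 * κ ^ 2 + 2 * c ^ 2) * (P ^ 2 + M ^ 2 * T) := by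
  have hT0 : 0 ≤ T := (sq_nonneg s).trans hsT
  have a1 : (M * δ) ^ 2 ≤ 16 * C₀ ^ 2 * (M ^ 2 * T) := by
    calc (M * δ) ^ 2 = M ^ 2 * δ ^ 2 := by ring
      _ ≤ M ^ 2 * (2 * C₀ * T) ^ 2 := by gcongr
      _ = 4 * C₀ ^ 2 * M ^ 2 * T * T := by ring
      _ ≤ 4 * C₀ ^ 2 * M ^ 2 * T * 4 := by gcongr
      _ = _ := by ring
  have a2 : (6 * κ * M * X) ^ 2 ≤ 72 * κ ^ 2 * (M ^ 2 * T) := by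
    calc (6 * κ * M * X) ^ 2 = 36 * κ ^ 2 * M ^ 2 * X ^ 2 := by ring
      _ ≤ 36 * κ ^ 2 * M ^ 2 * (2 * T) := by gcongr
      _ = _ := by ring
  have a3 : (F * c) ^ 2 ≤ 2 * c ^ 2 * (P ^ 2 + M ^ 2 * T) := by
    calc (F * c) ^ 2 = c ^ 2 * F ^ 2 := by ring
      _ ≤ c ^ 2 * (P + M * s) ^ 2 := by gcongr
      _ ≤ c ^ 2 * (2 * (P ^ 2 + M ^ 2 * s ^ 2)) := by
          gcongr
          nlinarith [sq_nonneg (P - M * s)]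
      _ ≤ c ^ 2 * (2 * (P ^ 2 + M ^ 2 * T)) := by gcongr
      _ = _ := by ring
  have hP : 0 ≤ P ^ 2 := sq_nonneg P
  calc V ^ 2 ≤ (N * (M * δ + 6 * κ * M * X + F * c)) ^ 2 := by gcongr
    _ = N ^ 2 * (M * δ + 6 * κ * M * X + F * c) ^ 2 := by ring
    _ ≤ N ^ 2 * (3 * ((M * δ) ^ 2 + (6 * κ * M * X) ^ 2 + (F * c) ^ 2)) := by
        gcongr
        nlinarith [sq_nonneg (M * δ - 6 * κ * M * X), sq_nonneg (M * δ - F * c),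
          sq_nonneg (6 * κ * M * X - F * c)]
    _ ≤ N ^ 2 * (3 * (16 * C₀ ^ 2 * (P ^ 2 + M ^ 2 * T) + 72 * κ ^ 2 * (P ^ 2 + M ^ 2 * T) +
        2 * c ^ 2 * (P ^ 2 + M ^ 2 * T))) := by
        have e1 : M ^ 2 * T ≤ P ^ 2 + M ^ 2 * T := by linarith
        have := mul_le_mul_of_nonneg_left e1 (by positivity : 0 ≤ 16 * C₀ ^ 2)
        have := mul_le_mul_of_nonneg_left e1 (by positivity : 0 ≤ 72 * κ ^ 2)
        gcongr <;> linarith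
    _ = _ := by ring

/-- Bound for the source term: the weight makes the horizontal integral concentrate on the ball of
radius comparable to `D`, so that the volume factor is `D · D^{n-1}`. -/
lemma source_integral {n : ℕ} {ε C₀ D ρ a K P M : ℝ} {h1 h2 η : Ep n → ℝ} {y₀ : Ep n}
    {Q : Efull n → ℝ} (hn : 2 ≤ n) (hΩ : IsOpen (Omega n ε h1 h2 1)) (hC₀ : 0 ≤ C₀)
    (hD0 : 0 < D) (hD2 : D ≤ 2) (hρ : 0 < ρ) (ha : a = ρ / D) (hK : 0 ≤ K)
    (hη : ∀ y, |η y| ≤ algWeight a (n + 1) y₀ y)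
    (hδ : ∀ y, ‖y‖ < 1 → ε + h1 y - h2 y ≤ 2 * C₀ * (D + ‖y - y₀‖ ^ 2))
    (hQ : ∀ x ∈ Omega n ε h1 h2 1, Q x ^ 2 ≤ K * (P ^ 2 + M ^ 2 * (D + ‖x.1 - y₀‖ ^ 2)))
    (hint : IntegrableOn (fun x => η x.1 ^ 2 * Q x ^ 2) (Omega n ε h1 h2 1)) :
    ∫ x in Omega n ε h1 h2 1, η x.1 ^ 2 * Q x ^ 2 ≤
      2 * C₀ * K * (1 + 2 / ρ ^ 2) ^ 2 * D * (P ^ 2 + M ^ 2 * D) *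
        ((a ^ (n - 1))⁻¹ * ∫ z : Ep n, ((1 + ‖z‖ ^ 2) ^ (2 * n))⁻¹) := by
  have ha0 : 0 < a := by rw [ha]; positivity
  set c := 1 + 2 / ρ ^ 2 with hc
  have hc1 : 1 ≤ c := by
    have : 0 ≤ 2 / ρ ^ 2 := by positivity
    linarith
  set A := P ^ 2 + M ^ 2 * D with hA
  have hA0 : 0 ≤ A := by positivity
  have hq0 : ∀ y : Ep n, 0 < 1 + a ^ 2 * ‖y - y₀‖ ^ 2 := fun y => by positivity
  have hT : ∀ y : Ep n, D + ‖y - y₀‖ ^ 2 ≤ c * D * (1 + a ^ 2 * ‖y - y₀‖ ^ 2) := by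
    intro y
    have e1 : ρ ^ 2 / 2 ≤ a ^ 2 * D := by
      have : a ^ 2 * D = ρ ^ 2 / D := by rw [ha]; field_simp
      rw [this]
      gcongr
    have e2 : ‖y - y₀‖ ^ 2 ≤ 2 / ρ ^ 2 * (a ^ 2 * D) * ‖y - y₀‖ ^ 2 := by
      have : (1:ℝ) ≤ 2 / ρ ^ 2 * (a ^ 2 * D) := by
        calc (1:ℝ) = 2 / ρ ^ 2 * (ρ ^ 2 / 2) := by field_simp
          _ ≤ _ := by gcongr
      nlinarith [sq_nonneg ‖y - y₀‖]
    have e3 : c * D * (1 + a ^ 2 * ‖y - y₀‖ ^ 2) = D + 2 / ρ ^ 2 * D + a ^ 2 * D * ‖y - y₀‖ ^ 2 +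
        2 / ρ ^ 2 * (a ^ 2 * D) * ‖y - y₀‖ ^ 2 := by rw [hc]; ring
    have e4 : 0 ≤ 2 / ρ ^ 2 * D := by positivity
    have e5 : 0 ≤ a ^ 2 * D * ‖y - y₀‖ ^ 2 := by positivity
    linarith
  have hsucc : ∀ (k : ℕ) (y : Ep n),
      algWeight a (k + 1) y₀ y * (1 + a ^ 2 * ‖y - y₀‖ ^ 2) = algWeight a k y₀ y := by
    intro k y
    have := (hq0 y).ne'
    unfold algWeight
    rw [pow_succ]
    field_simp
  obtain ⟨ki, kv⟩ := kernel_integral hn ha0 y₀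
  obtain ⟨si, sv⟩ := slab_integral_le hΩ (F := fun y => K * c * A * algWeight a (2 * n + 1) y₀ y)
    (G := fun y => 2 * C₀ * K * c ^ 2 * D * A * algWeight a (2 * n) y₀ y)
    (continuous_const.mul (algWeight_contDiff a _ y₀).continuous)
    (fun y => by have := algWeight_pos a (2 * n + 1) y₀ y; positivity) (ki.const_mul _)
    (fun y => by have := algWeight_pos a (2 * n) y₀ y; positivity) (by
      intro y hy
      have w0 := algWeight_pos a (2 * n + 1) y₀ y
      calc K * c * A * algWeight a (2 * n + 1) y₀ y * (ε + h1 y - h2 y)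
          ≤ K * c * A * algWeight a (2 * n + 1) y₀ y *
            (2 * C₀ * (c * D * (1 + a ^ 2 * ‖y - y₀‖ ^ 2))) := by
            gcongr
            exact (hδ y hy).trans (by gcongr; exact hT y)
        _ = 2 * C₀ * K * c ^ 2 * D * A *
            (algWeight a (2 * n + 1) y₀ y * (1 + a ^ 2 * ‖y - y₀‖ ^ 2)) := by ring
        _ = _ := by rw [hsucc])
  have sv2 := integral_const_mul (μ := (volume : Measure (Ep n))) (2 * C₀ * K * c ^ 2 * D * A)
    (algWeight a (2 * n) y₀)
  rw [sv2, kv] at sv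
  refine le_trans (setIntegral_mono_on hint si hΩ.measurableSet fun x hx => ?_) sv
  have w0 := algWeight_pos a (n + 1) y₀ x.1
  have e1 : η x.1 ^ 2 ≤ algWeight a (2 * n + 1 + 1) y₀ x.1 := by
    calc η x.1 ^ 2 = |η x.1| ^ 2 := (sq_abs _).symm
      _ ≤ algWeight a (n + 1) y₀ x.1 ^ 2 := by gcongr; exact hη _
      _ = _ := by unfold algWeight; rw [inv_pow, ← pow_mul]; congr 2; ring
  have w1 := algWeight_pos a (2 * n + 1 + 1) y₀ x.1
  have hq1 : 1 ≤ 1 + a ^ 2 * ‖x.1 - y₀‖ ^ 2 := by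
    have : 0 ≤ a ^ 2 * ‖x.1 - y₀‖ ^ 2 := by positivity
    linarith
  have e2 : P ^ 2 + M ^ 2 * (D + ‖x.1 - y₀‖ ^ 2) ≤ c * A * (1 + a ^ 2 * ‖x.1 - y₀‖ ^ 2) := by
    have t := hT x.1
    have : P ^ 2 * 1 ≤ P ^ 2 * (c * (1 + a ^ 2 * ‖x.1 - y₀‖ ^ 2)) := by
      gcongr
      exact one_le_mul_of_one_le_of_one_le hc1 hq1
    have h2' : M ^ 2 * (D + ‖x.1 - y₀‖ ^ 2) ≤ M ^ 2 * (c * D * (1 + a ^ 2 * ‖x.1 - y₀‖ ^ 2)) := by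
      gcongr
    calc _ ≤ P ^ 2 * (c * (1 + a ^ 2 * ‖x.1 - y₀‖ ^ 2)) +
          M ^ 2 * (c * D * (1 + a ^ 2 * ‖x.1 - y₀‖ ^ 2)) := by linarith
      _ = _ := by rw [hA]; ring
  calc η x.1 ^ 2 * Q x ^ 2 ≤ algWeight a (2 * n + 1 + 1) y₀ x.1 *
        (K * (c * A * (1 + a ^ 2 * ‖x.1 - y₀‖ ^ 2))) := by
        gcongr
        exact (hQ x hx).trans (by gcongr)
    _ = K * c * A * (algWeight a (2 * n + 1 + 1) y₀ x.1 * (1 + a ^ 2 * ‖x.1 - y₀‖ ^ 2)) := by ring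
    _ = _ := by rw [hsucc]

/-! ### The local estimate -/

/-- Thickness and `|y|²` are controlled by `D + |y - y₀|²`, where `D = ε + |y₀|²`. -/
lemma gap_le {n : ℕ} {ε C₀ : ℝ} {h1 h2 : Ep n → ℝ} (hε : 0 < ε) (hC₀ : 1 ≤ C₀)
    (hδ : DeltaComp n ε C₀ h1 h2) (y₀ : Ep n) {y : Ep n} (hy : ‖y‖ < 1) :
    ε + h1 y - h2 y ≤ 2 * C₀ * (ε + ‖y₀‖ ^ 2 + ‖y - y₀‖ ^ 2) ∧
      ‖y‖ ^ 2 ≤ 2 * (ε + ‖y₀‖ ^ 2 + ‖y - y₀‖ ^ 2) := by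
  have h1' : ‖y‖ ≤ ‖y₀‖ + ‖y - y₀‖ := norm_le_norm_add_norm_sub' y y₀
  have h2' : ‖y‖ ^ 2 ≤ (‖y₀‖ + ‖y - y₀‖) ^ 2 := by gcongr
  have h3' : ε + ‖y‖ ^ 2 ≤ 2 * (ε + ‖y₀‖ ^ 2 + ‖y - y₀‖ ^ 2) := by
    nlinarith [sq_nonneg (‖y₀‖ - ‖y - y₀‖)]
  refine ⟨(hδ y hy.le).2.trans ?_, by linarith⟩
  calc C₀ * (ε + ‖y‖ ^ 2) ≤ C₀ * (2 * (ε + ‖y₀‖ ^ 2 + ‖y - y₀‖ ^ 2)) := by gcongr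
    _ = _ := by ring

/-- Pointwise size of the source `δ Δũ`: at distance `s` from `x₀'` it is controlled by
`|φ - ψ|(x₀')` and by the `C²`-norms times `√(D + s²)`. -/
lemma source_pointwise {n : ℕ} {ε κ1 C₀ : ℝ} {h1 h2 φ ψ : Ep n → ℝ} (hε : 0 < ε) (hε1 : ε < 1)
    (hC₀ : 1 ≤ C₀)
    (g1 : ContDiffOn ℝ 2 h1 (closedBall 0 1)) (g2 : ContDiffOn ℝ 2 h2 (closedBall 0 1))
    (z1 : fderiv ℝ h1 0 = 0) (z2 : fderiv ℝ h2 0 = 0)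
    (hκ : C2norm n h1 + C2norm n h2 ≤ κ1) (hδ : DeltaComp n ε C₀ h1 h2)
    (gφ : ContDiffOn ℝ 2 φ (closedBall 0 1)) (gψ : ContDiffOn ℝ 2 ψ (closedBall 0 1))
    {y₀ : Ep n} (hy₀ : ‖y₀‖ < 1/2) {x : Efull n} (hx : x ∈ Omega n ε h1 h2 1) :
    ((ε + h1 x.1 - h2 x.1) * |lapl n (util n ε h1 h2 φ ψ) x|) ^ 2 ≤
      3 * (n:ℝ) ^ 2 * (16 * C₀ ^ 2 + 72 * κ1 ^ 2 + 2 * (3 * κ1 + 12 * κ1 ^ 2 * C₀) ^ 2) *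
        (|φ y₀ - ψ y₀| ^ 2 + (C2norm n φ + C2norm n ψ) ^ 2 * (ε + ‖y₀‖ ^ 2 + ‖x.1 - y₀‖ ^ 2)) := by
  have hx1 : ‖x.1‖ < 1 := hx.1
  have gp := (gap_pos hε hC₀ hδ hx1.le).2
  have lb := lapl_util_bound hε hC₀ g1 g2 z1 z2 hκ hδ gφ gψ hx
  have hs : ‖x.1 - y₀‖ ≤ 3/2 := by
    have := norm_sub_le x.1 y₀
    linarith
  have s2 : ‖x.1 - y₀‖ ^ 2 ≤ (3/2) ^ 2 := by gcongr
  have s3 : ‖y₀‖ ^ 2 ≤ (1/2) ^ 2 := by gcongr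
  obtain ⟨b1, b2⟩ := gap_le hε hC₀ hδ y₀ hx1
  refine scalar_source (T := ε + ‖y₀‖ ^ 2 + ‖x.1 - y₀‖ ^ 2) gp.le (abs_nonneg (φ x.1 - ψ x.1))
    (by positivity) ?_ lb b1 b2 (s := ‖x.1 - y₀‖) ?_ ?_
  · norm_num at s2 s3
    linarith
  · have l1 := lipschitz_of_C2 gφ hx1 (by linarith : ‖y₀‖ < 1)
    have l2 := lipschitz_of_C2 gψ hx1 (by linarith : ‖y₀‖ < 1)
    have : φ x.1 - ψ x.1 = (φ y₀ - ψ y₀) + (φ x.1 - φ y₀) - (ψ x.1 - ψ y₀) := by ring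
    rw [this, add_mul]
    have t1 := abs_sub (φ y₀ - ψ y₀ + (φ x.1 - φ y₀)) (ψ x.1 - ψ y₀)
    have t2 := abs_add_le (φ y₀ - ψ y₀) (φ x.1 - φ y₀)
    linarith
  · have : 0 ≤ ‖y₀‖ ^ 2 := by positivity
    linarith

/-- Passing from the weighted energy to the energy in `Ω̂_s(x₀)`, on which the weight is bounded
below by `2^{-m}`. -/
lemma local_le_weighted {n m : ℕ} {ε a s : ℝ} {h1 h2 χ : Ep n → ℝ} {x₀ : Efull n}
    {w : Efull n → ℝ} (hn : 2 ≤ n) (c1 : ContinuousOn h1 (closedBall 0 1))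
    (c2 : ContinuousOn h2 (closedBall 0 1)) (ha : 0 ≤ a) (has : a * s ≤ 1)
    (hχ1 : ∀ y, ‖y‖ ≤ 5/8 → χ y = 1)
    (hint : IntegrableOn (fun x => (χ x.1 * algWeight a m x₀.1 x.1) ^ 2 *
      ∑ α, (fderiv ℝ w x (dir n α)) ^ 2) (Omega n ε h1 h2 1)) :
    ∫ x in OmegaHat n ε h1 h2 x₀ s, ‖fderiv ℝ w x‖ ^ 2 ≤ n * 4 ^ m *
      ∫ x in Omega n ε h1 h2 1, (χ x.1 * algWeight a m x₀.1 x.1) ^ 2 *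
        ∑ α, (fderiv ℝ w x (dir n α)) ^ 2 := by
  have hsub : OmegaHat n ε h1 h2 x₀ s ⊆ Omega n ε h1 h2 1 := fun x hx =>
    ⟨hx.1.1.trans (by norm_num), hx.1.2⟩
  have hm : MeasurableSet (OmegaHat n ε h1 h2 x₀ s) := by
    have o : IsOpen {x : Efull n | ‖x.1 - x₀.1‖ < s} :=
      isOpen_lt (by fun_prop) continuous_const
    exact ((Omega_isOpen c1 c2 (by norm_num : (1/2:ℝ) ≤ 1)).inter o).measurableSet
  have hnn : ∀ x : Efull n, 0 ≤ (χ x.1 * algWeight a m x₀.1 x.1) ^ 2 *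
      ∑ α, (fderiv ℝ w x (dir n α)) ^ 2 := fun x =>
    mul_nonneg (sq_nonneg _) (Finset.sum_nonneg fun α _ => sq_nonneg _)
  have i2 := hint.mono_set hsub
  calc ∫ x in OmegaHat n ε h1 h2 x₀ s, ‖fderiv ℝ w x‖ ^ 2
      ≤ ∫ x in OmegaHat n ε h1 h2 x₀ s, n * 4 ^ m * ((χ x.1 * algWeight a m x₀.1 x.1) ^ 2 *
        ∑ α, (fderiv ℝ w x (dir n α)) ^ 2) := by
        refine integral_mono_of_nonneg (Eventually.of_forall fun x => by positivity)
          (i2.const_mul _) ?_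
        refine (ae_restrict_mem hm).mono fun x hx => ?_
        have hx1 : χ x.1 = 1 := hχ1 _ (hx.1.1.le.trans (by norm_num))
        have q : a * ‖x.1 - x₀.1‖ ≤ 1 := (mul_le_mul_of_nonneg_left hx.2.le ha).trans has
        have q2 : 1 + a ^ 2 * ‖x.1 - x₀.1‖ ^ 2 ≤ 2 := by
          have : (a * ‖x.1 - x₀.1‖) ^ 2 ≤ 1 ^ 2 := by gcongr
          rw [mul_pow] at this
          linarith
        have q3 : (1:ℝ) ≤ 4 ^ m * algWeight a m x₀.1 x.1 ^ 2 := by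
          unfold algWeight
          rw [inv_pow, ← div_eq_mul_inv, one_le_div (by positivity), ← pow_mul, mul_comm m 2,
            pow_mul]
          gcongr
          have : (1 + a ^ 2 * ‖x.1 - x₀.1‖ ^ 2) ^ 2 ≤ 2 ^ 2 := by gcongr
          norm_num at this
          exact this
        have hs0 : 0 ≤ ∑ α, (fderiv ℝ w x (dir n α)) ^ 2 :=
          Finset.sum_nonneg fun α _ => sq_nonneg _
        have cl := clm_norm_sq_le hn (fderiv ℝ w x)
        calc ‖fderiv ℝ w x‖ ^ 2 ≤ n * (1 * ∑ α, (fderiv ℝ w x (dir n α)) ^ 2) := by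
              rw [one_mul]; exact cl
          _ ≤ n * ((4 ^ m * algWeight a m x₀.1 x.1 ^ 2) *
              ∑ α, (fderiv ℝ w x (dir n α)) ^ 2) := by gcongr
          _ = _ := by simp only [hx1]; ring
    _ = n * 4 ^ m * ∫ x in OmegaHat n ε h1 h2 x₀ s, (χ x.1 * algWeight a m x₀.1 x.1) ^ 2 *
        ∑ α, (fderiv ℝ w x (dir n α)) ^ 2 := integral_const_mul _ _
    _ ≤ _ := by
        gcongr
        · exact Eventually.of_forall hnn

/-- Arithmetic of the constants in the local estimate. -/
lemma scalar_final {n m : ℕ} {N C1 S D P A F G E X : ℝ} (hm : m = n + 1) (hN : 0 ≤ N)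
    (hC1 : 0 ≤ C1) (hS : 0 ≤ S) (hD0 : 0 < D) (hD2 : D ≤ 2) (hA : 0 ≤ A)
    (hE : E = C1 * D ^ (4 * m))
    (hX : X ≤ S * D ^ n * (P ^ 2 + (F + G) ^ 2 * D)) :
    N * (4 * E * A + 8 * X) ≤ (N * (4 * C1 * 2 ^ (3 * n + 3) + 16 * S) + 1) * D ^ n *
      (P ^ 2 + D * (A + F ^ 2 + G ^ 2)) := by
  have h1 : D ^ (4 * m) ≤ 2 ^ (3 * n + 3) * (D ^ n * D) := by
    have : D ^ (4 * m) = D ^ (3 * n + 3) * (D ^ n * D) := by rw [hm]; ring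
    rw [this]
    gcongr
  have h2 : (F + G) ^ 2 ≤ 2 * (F ^ 2 + G ^ 2) := by nlinarith [sq_nonneg (F - G)]
  set R := P ^ 2 + D * (A + F ^ 2 + G ^ 2) with hR
  have hR0 : 0 ≤ R := by positivity
  have h3 : P ^ 2 + (F + G) ^ 2 * D ≤ 2 * R := by
    have : (F + G) ^ 2 * D ≤ 2 * (F ^ 2 + G ^ 2) * D := by gcongr
    have h0 : 0 ≤ D * A := by positivity
    have h0' := sq_nonneg P
    rw [hR]
    linarith
  have h4 : D * A ≤ R := by
    have h0 : 0 ≤ D * (F ^ 2 + G ^ 2) := by positivity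
    have h0' := sq_nonneg P
    rw [hR]
    linarith
  have h5 : 4 * E * A ≤ 4 * C1 * 2 ^ (3 * n + 3) * D ^ n * R := by
    calc 4 * E * A = 4 * C1 * D ^ (4 * m) * A := by rw [hE]; ring
      _ ≤ 4 * C1 * (2 ^ (3 * n + 3) * (D ^ n * D)) * A := by gcongr
      _ = 4 * C1 * 2 ^ (3 * n + 3) * D ^ n * (D * A) := by ring
      _ ≤ _ := by gcongr
  have h6 : 8 * X ≤ 16 * S * D ^ n * R := by
    calc 8 * X ≤ 8 * (S * D ^ n * (2 * R)) := by
          gcongr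
          exact hX.trans (by gcongr)
      _ = _ := by ring
  have h7 : 0 ≤ D ^ n * R := by positivity
  calc N * (4 * E * A + 8 * X) ≤ N * (4 * C1 * 2 ^ (3 * n + 3) * D ^ n * R + 16 * S * D ^ n * R) := by
        gcongr
    _ = (N * (4 * C1 * 2 ^ (3 * n + 3) + 16 * S)) * D ^ n * R := by ring
    _ ≤ _ := by
        rw [add_mul, add_mul]
        linarith

lemma scalar_tail {m : ℕ} {N b ρ D : ℝ} (hρ : ρ ≠ 0) :
    N * (b * (D ^ 2 / ρ ^ 4) ^ m) ^ 2 = N * (b / ρ ^ (4 * m)) ^ 2 * D ^ (4 * m) := by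
  have e1 : (D ^ 2 / ρ ^ 4) ^ m = D ^ (2 * m) / ρ ^ (4 * m) := by
    rw [div_pow, ← pow_mul, ← pow_mul]
  have e2 : D ^ (4 * m) = (D ^ (2 * m)) ^ 2 := by rw [← pow_mul]; congr 1; ring
  rw [e1, e2]
  field_simp

lemma scalar_volume {n : ℕ} {b ρ D a R J : ℝ} (hn : 1 ≤ n) (hρ : ρ ≠ 0) (hD : D ≠ 0)
    (ha : a = ρ / D) :
    b * D * R * ((a ^ (n - 1))⁻¹ * J) = b * J / ρ ^ (n - 1) * D ^ n * R := by
  obtain ⟨k, rfl⟩ : ∃ k, n = k + 1 := ⟨n - 1, by omega⟩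
  rw [Nat.add_sub_cancel, ha, div_pow, inv_div, pow_succ]
  field_simp

/-- Scale-invariant form of the local estimate: with `D = ε + |x₀'|²`, both regimes
`|x₀'| ≤ √ε` and `√ε < |x₀'| < 1/2` are covered at once. -/
lemma local_energy (n : ℕ) (hn : 2 ≤ n) (κ1 C₀ : ℝ) (hC₀ : 1 ≤ C₀) :
    ∃ C : ℝ, 0 < C ∧ ∀ ε ∈ Set.Ioo (0:ℝ) 1, ∀ h1 h2 : Ep n → ℝ,
      ContDiffOn ℝ 2 h1 (closedBall 0 1) → ContDiffOn ℝ 2 h2 (closedBall 0 1) →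
      fderiv ℝ h1 0 = 0 → fderiv ℝ h2 0 = 0 → C2norm n h1 + C2norm n h2 ≤ κ1 →
      DeltaComp n ε C₀ h1 h2 →
    ∀ (u : Efull n → ℝ) (φ ψ : Ep n → ℝ),
      ContDiffOn ℝ 2 φ (closedBall 0 1) → ContDiffOn ℝ 2 ψ (closedBall 0 1) →
      HarmBV n ε h1 h2 u φ ψ →
    ∀ x₀ ∈ Omega n ε h1 h2 (1/2),
      (∫ x in OmegaHat n ε h1 h2 x₀ (ε + h1 x₀.1 - h2 x₀.1),
          ‖fderiv ℝ (fun z => u z - util n ε h1 h2 φ ψ z) x‖^2) ≤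
        C * (ε + ‖x₀.1‖^2)^n * (|φ x₀.1 - ψ x₀.1|^2 +
          (ε + ‖x₀.1‖^2) * ((∫ x in Omega n ε h1 h2 1, ‖u x - util n ε h1 h2 φ ψ x‖^2) +
            (C2norm n φ)^2 + (C2norm n ψ)^2)) := by
  obtain ⟨χ, L, hL, hχ, hχ01, hχ1, hχs, hχL⟩ := exists_cutoff n
  have hn1 : (2:ℝ) ≤ n := by exact_mod_cast hn
  have hn0 : (0:ℝ) < n := by linarith
  have hC0 : 0 < C₀ := by linarith
  set m := n + 1 with hm
  have hm3 : (3:ℝ) ≤ m := by rw [hm]; push_cast; linarith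
  have hm0 : (0:ℝ) < m := by linarith
  -- the choice of `ρ` makes the slope of the weight small compared with the inverse thickness
  set ρ : ℝ := 1 / (24 * n * m * C₀) with hρdef
  have hρ : 0 < ρ := by positivity
  have hsmall : 24 * n * m * C₀ * ρ = 1 := by rw [hρdef]; field_simp
  have hnm : 6 ≤ (n:ℝ) * m := by nlinarith
  have hρC : 24 * 6 * (C₀ * ρ) ≤ 1 := by
    have : 0 ≤ C₀ * ρ := by positivity
    nlinarith
  have hρ16 : ρ ≤ 1/16 := by
    have : ρ ≤ C₀ * ρ := by nlinarith
    linarith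
  set J : ℝ := ∫ z : Ep n, ((1 + ‖z‖ ^ 2) ^ (2 * n))⁻¹ with hJ
  have hJ0 : 0 ≤ J := integral_nonneg fun z => by positivity
  set K : ℝ := 3 * (n:ℝ) ^ 2 * (16 * C₀ ^ 2 + 72 * κ1 ^ 2 + 2 * (3 * κ1 + 12 * κ1 ^ 2 * C₀) ^ 2)
    with hKdef
  have hK0 : 0 ≤ K := by positivity
  set C1 : ℝ := 4 * n * ((2 * m / ρ + L) / ρ ^ (4 * m)) ^ 2 with hC1
  have hC10 : 0 ≤ C1 := by positivity
  set S : ℝ := 2 * C₀ * K * (1 + 2 / ρ ^ 2) ^ 2 * J / ρ ^ (n - 1) with hS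
  have hS0 : 0 ≤ S := by positivity
  refine ⟨n * 4 ^ m * (4 * C1 * 2 ^ (3 * n + 3) + 16 * S) + 1, by positivity, ?_⟩
  rintro ε ⟨hε, hε1⟩ h1 h2 g1 g2 z1 z2 hκ hδ u φ ψ gφ gψ hu x₀ hx₀
  obtain ⟨w, hw⟩ : ∃ w : Efull n → ℝ, w = fun z => u z - util n ε h1 h2 φ ψ z := ⟨_, rfl⟩
  have hw' : ∀ x, u x - util n ε h1 h2 φ ψ x = w x := fun x => by rw [hw]
  simp only [hw']
  set y₀ := x₀.1 with hy₀def
  have hy₀ : ‖y₀‖ < 1/2 := hx₀.1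
  set D := ε + ‖y₀‖ ^ 2 with hD
  have hD0 : 0 < D := by positivity
  have hy₀2 : ‖y₀‖ ^ 2 ≤ 1/4 := by nlinarith [norm_nonneg y₀]
  have hD2 : D ≤ 5/4 := by linarith
  set a := ρ / D with ha
  have ha0 : 0 < a := by positivity
  set Ω := Omega n ε h1 h2 1 with hΩdef
  have hΩ : IsOpen Ω := Omega_isOpen g1.continuousOn g2.continuousOn le_rfl
  have hpos : ∀ y : Ep n, ‖y‖ ≤ 1 → 0 < ε + h1 y - h2 y := fun y hy => (gap_pos hε hC₀ hδ hy).2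
  obtain ⟨cw, m0, m1, m2, hlap⟩ := w_facts hε hC₀ g1 g2 z1 z2 hκ hδ gφ gψ hu hw
  set η : Ep n → ℝ := fun y => χ y * algWeight a m y₀ y with hη
  have hη1 : ContDiff ℝ 1 η := hχ.mul (algWeight_contDiff a m y₀)
  have hηle : ∀ y, |η y| ≤ algWeight a m y₀ y := by
    intro y
    have p := algWeight_pos a m y₀ y
    rw [hη, abs_mul, abs_of_nonneg (hχ01 y).1, abs_of_pos p]
    exact mul_le_of_le_one_left p.le (hχ01 y).2
  obtain ⟨wb1, wb2⟩ := weight_bound hε hn hC₀ hδ hD hy₀ hρ hρ16 hsmall.le ha hL hχ hχ01 hχ1 hχL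
  obtain ⟨i1, i2, en⟩ := energy_ineq hn hε hC₀ g1 g2 hδ cw m0 m1 m2 hη1
    (B := 1 + L + 2 * m * a)
    (fun y => (hηle y).trans ((algWeight_le_one a m y₀ y).trans (by
      have : 0 ≤ 2 * m * a := by positivity
      linarith))) wb1 (fun t ht => by
      obtain ⟨k, kc, ks, kk⟩ := compact_superlevel g1 g2 gφ gψ hpos hu.2.2.2 ht
      refine ⟨k, kc, ks, fun x hx hx2 hx3 => kk x hx (hχs _ fun h => hx2 ?_) ?_⟩
      · simp [hη, h]
      · rwa [hw']) wb2
  set M := C2norm n φ + C2norm n ψ with hM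
  set P := |φ y₀ - ψ y₀| with hP
  have src := source_integral (P := P) (M := M) (Q := fun x => (ε + h1 x.1 - h2 x.1) * lapl n w x)
    hn hΩ hC0.le hD0 (by linarith) hρ ha hK0 hηle (fun y hy => (gap_le hε hC₀ hδ y₀ hy).1) (by
      intro x hx
      have e : ((ε + h1 x.1 - h2 x.1) * lapl n w x) ^ 2 =
          ((ε + h1 x.1 - h2 x.1) * |lapl n (util n ε h1 h2 φ ψ) x|) ^ 2 := by
        rw [← hlap x hx, mul_pow, mul_pow, sq_abs]
      rw [e]
      exact source_pointwise hε hε1 hC₀ g1 g2 z1 z2 hκ hδ gφ gψ hy₀ hx) i2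
  have has : a * (ε + h1 y₀ - h2 y₀) ≤ 1 := by
    calc a * (ε + h1 y₀ - h2 y₀) ≤ a * (C₀ * D) := by
          gcongr
          exact (hδ y₀ (by linarith)).2
      _ = C₀ * ρ := by rw [ha]; field_simp
      _ ≤ 1 := by linarith
  have loc := local_le_weighted hn g1.continuousOn g2.continuousOn ha0.le has hχ1 i1
  refine loc.trans ((mul_le_mul_of_nonneg_left en (by positivity)).trans ?_)
  refine scalar_final hm (by positivity) hC10 hS0 hD0 (by linarith)
    (integral_nonneg fun x => by positivity) ?_ ?_
  · rw [hC1]; exact scalar_tail hρ.ne'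
  · refine src.trans (le_of_eq ?_)
    rw [hS, ← hJ]
    exact scalar_volume (by omega) hρ.ne' hD0.ne' ha

end

theorem stmt18 (n : ℕ) (hn : 2 ≤ n) (κ0 κ1 C₀ : ℝ)
    (hκ0 : 0 < κ0) (hκ1 : 0 < κ1) (hC₀ : 1 ≤ C₀) :
    ∃ ε₀ ∈ Set.Ioo (0:ℝ) 1, ∃ C : ℝ, 0 < C ∧
    ∀ ε ∈ Set.Ioo (0:ℝ) ε₀, ∀ h1 h2 : Ep n → ℝ,
      HGeom n ε κ0 κ1 h1 h2 → DeltaComp n ε C₀ h1 h2 →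
    ∀ (u : Efull n → ℝ) (φ ψ : Ep n → ℝ),
      ContDiffOn ℝ 2 φ (closedBall 0 1) → ContDiffOn ℝ 2 ψ (closedBall 0 1) →
      HarmBV n ε h1 h2 u φ ψ →
    (∀ x₀ ∈ Omega n ε h1 h2 (1/2), ‖x₀.1‖ ≤ Real.sqrt ε →
      (∫ x in OmegaHat n ε h1 h2 x₀ (ε + h1 x₀.1 - h2 x₀.1),
          ‖fderiv ℝ (fun z => u z - util n ε h1 h2 φ ψ z) x‖^2) ≤
        C * ε^n * (|φ x₀.1 - ψ x₀.1|^2 +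
          ε * ((∫ x in Omega n ε h1 h2 1, ‖u x - util n ε h1 h2 φ ψ x‖^2) +
            (C2norm n φ)^2 + (C2norm n ψ)^2))) ∧
    (∀ x₀ ∈ Omega n ε h1 h2 (1/2), Real.sqrt ε < ‖x₀.1‖ → ‖x₀.1‖ < 1/2 →
      (∫ x in OmegaHat n ε h1 h2 x₀ (ε + h1 x₀.1 - h2 x₀.1),
          ‖fderiv ℝ (fun z => u z - util n ε h1 h2 φ ψ z) x‖^2) ≤
        C * ‖x₀.1‖^(2*n) * (|φ x₀.1 - ψ x₀.1|^2 +
          ‖x₀.1‖^2 * ((∫ x in Omega n ε h1 h2 1, ‖u x - util n ε h1 h2 φ ψ x‖^2) +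
            (C2norm n φ)^2 + (C2norm n ψ)^2))) := by
  obtain ⟨C, hC, key⟩ := local_energy n hn κ1 C₀ hC₀
  refine ⟨1/2, by norm_num, C * 2 ^ (n + 1), by positivity, ?_⟩
  rintro ε ⟨hε, hε1⟩ h1 h2 ⟨g1, g2, -, -, -, z1, z2, -, hκ⟩ hδ u φ ψ gφ gψ hu
  have fin : ∀ {D T P A : ℝ}, 0 ≤ D → D ≤ 2 * T → 0 ≤ P → 0 ≤ A →
      C * D ^ n * (P + D * A) ≤ C * 2 ^ (n + 1) * T ^ n * (P + T * A) := by
    intro D T P A hD hDT hP hA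
    have hT : 0 ≤ T := by linarith
    calc C * D ^ n * (P + D * A) ≤ C * (2 * T) ^ n * (2 * P + (2 * T) * A) := by
          gcongr
          linarith
      _ = _ := by rw [mul_pow, pow_succ]; ring
  have key' := key ε ⟨hε, by linarith⟩ h1 h2 g1 g2 z1 z2 hκ hδ u φ ψ gφ gψ hu
  have hA : 0 ≤ (∫ x in Omega n ε h1 h2 1, ‖u x - util n ε h1 h2 φ ψ x‖^2) +
      (C2norm n φ)^2 + (C2norm n ψ)^2 := by
    have : 0 ≤ ∫ x in Omega n ε h1 h2 1, ‖u x - util n ε h1 h2 φ ψ x‖^2 :=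
      integral_nonneg fun x => by positivity
    positivity
  constructor
  · intro x₀ hx₀ hs
    have : ‖x₀.1‖ ^ 2 ≤ ε := by
      have := pow_le_pow_left₀ (norm_nonneg _) hs 2
      rwa [Real.sq_sqrt hε.le] at this
    exact (key' x₀ hx₀).trans (fin (by positivity) (by linarith) (by positivity) hA)
  · intro x₀ hx₀ hs _
    have : ε ≤ ‖x₀.1‖ ^ 2 := by
      have := pow_le_pow_left₀ (Real.sqrt_nonneg _) hs.le 2
      rwa [Real.sq_sqrt hε.le] at this
    rw [pow_mul]
    exact (key' x₀ hx₀).trans (fin (by positivity) (by linarith) (by positivity) hA)
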